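/- arXiv:0909.2326 — 3 statements merged into one kernel-verified Lean document; each statement's English description precedes it below -/
import Mathlib

section
/- Let Ω ⊆ ℝ² be open and connected and let u₁, u₂ : Ω → ℝ be C² functions each satisfying the minimal surface equation on Ω. If u₁ ≤ u₂ on Ω and u₁(p) = u₂(p) for some p ∈ Ω, then u₁ = u₂ on all of Ω. -/
/-- Partial derivative in the first coordinate direction of a function on `ℝ²`. -/
noncomputable def pdx (u : ℝ × ℝ → ℝ) (p : ℝ × ℝ) : ℝ := fderiv ℝ u p (1, 0)

/-- Partial derivative in the second coordinate direction of a function on `ℝ²`. -/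
noncomputable def pdy (u : ℝ × ℝ → ℝ) (p : ℝ × ℝ) : ℝ := fderiv ℝ u p (0, 1)

/-- `u` satisfies the minimal surface equation
`(1 + u_y²) u_xx − 2 u_x u_y u_xy + (1 + u_x²) u_yy = 0` on `Ω`. -/
def SatisfiesMinimalSurfaceEquation (u : ℝ × ℝ → ℝ) (Ω : Set (ℝ × ℝ)) : Prop :=
  ∀ p ∈ Ω,
    (1 + pdy u p ^ 2) * pdx (pdx u) p - 2 * pdx u p * pdy u p * pdy (pdx u) p
      + (1 + pdx u p ^ 2) * pdy (pdy u) p = 0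

/-!
The difference `w = u₂ - u₁ ≥ 0` solves a linear equation `L w = 0` without zeroth-order term:
differencing the coefficients of the minimal surface equation produces the first-order part of `L`,
while its principal part is the one of `u₂` and hence elliptic. If the zero set of `w` were not
open, some ball with centre `c` would touch it from outside, at a single nearby point `z`. For large
`α`, Hopf's barrier `h = exp (-α |x - c|²)` satisfies `L h > 0` near `z`, and among the zeros of `w`
near `z` it is maximal at `z` only; so for small `ε > 0` the function `w - ε h` has a local minimum
near `z`. There `L (w - ε h) ≥ 0`, contradicting `L (w - ε h) = -ε L h < 0`.
-/

open Set Filter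
open scoped Topology RealInnerProductSpace

section Calculus

theorem deriv_deriv_nonneg_of_isLocalMin {f : ℝ → ℝ} {a : ℝ} (hmin : IsLocalMin f a)
    (hf : ContinuousAt f a) : 0 ≤ deriv (deriv f) a := by
  by_contra! hneg
  have hmax : IsLocalMax f a := isLocalMax_of_deriv_deriv_neg hneg hmin.deriv_eq_zero hf
  have hconst : f =ᶠ[𝓝 a] fun _ ↦ f a := by
    filter_upwards [hmin, hmax] with x hge hle using le_antisymm hle hge
  have hzero : deriv (deriv f) a = 0 := by simpa using hconst.deriv.deriv_eq
  exact hneg.ne hzero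

variable {E : Type*} [NormedAddCommGroup E] [NormedSpace ℝ E] {f : E → ℝ} {x : E}

theorem differentiableAt_fderiv_of_contDiffAt_two (hf : ContDiffAt ℝ 2 f x) :
    DifferentiableAt ℝ (fderiv ℝ f) x :=
  (hf.fderiv_right (m := 1) (by norm_num)).differentiableAt one_ne_zero

theorem fderiv_fderiv_apply_const (hf : ContDiffAt ℝ 2 f x) (v w : E) :
    fderiv ℝ (fun y ↦ fderiv ℝ f y v) x w = fderiv ℝ (fderiv ℝ f) x w v := by
  rw [fderiv_clm_apply (differentiableAt_fderiv_of_contDiffAt_two hf) (differentiableAt_const v)]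
  simp

theorem deriv_deriv_comp_add_smul (hf : ContDiffAt ℝ 2 f x) (v : E) :
    deriv (deriv fun t : ℝ ↦ f (x + t • v)) 0 = fderiv ℝ (fderiv ℝ f) x v v := by
  have hline (t : ℝ) : HasDerivAt (fun t : ℝ ↦ x + t • v) v t := by
    simpa using ((hasDerivAt_id t).smul_const v).const_add x
  have hline_zero : Tendsto (fun t : ℝ ↦ x + t • v) (𝓝 0) (𝓝 x) := by
    simpa using (hline 0).continuousAt.tendsto
  have hfirst : deriv (fun t : ℝ ↦ f (x + t • v)) =ᶠ[𝓝 0] fun t ↦ fderiv ℝ f (x + t • v) v := by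
    filter_upwards [hline_zero.eventually (hf.eventually (by simp))] with t ht
    exact ((ht.differentiableAt two_ne_zero).hasFDerivAt.comp_hasDerivAt t (hline t)).deriv
  have hsecond := (differentiableAt_fderiv_of_contDiffAt_two hf).hasFDerivAt.comp_hasDerivAt_of_eq
    0 (hline 0) (by simp)
  rw [hfirst.deriv_eq]
  exact (by simpa using hsecond.clm_apply (hasDerivAt_const 0 v) : HasDerivAt _ _ _).deriv

theorem fderiv_fderiv_nonneg_of_isLocalMin (hf : ContDiffAt ℝ 2 f x) (hmin : IsLocalMin f x)
    (v : E) : 0 ≤ fderiv ℝ (fderiv ℝ f) x v v := by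
  have hline : ContinuousAt (fun t : ℝ ↦ x + t • v) 0 := by fun_prop
  have hline_zero : x + (0 : ℝ) • v = x := by simp
  rw [← deriv_deriv_comp_add_smul hf v]
  refine deriv_deriv_nonneg_of_isLocalMin ?_ ?_
  · exact IsLocalMin.comp_continuous (by rwa [hline_zero]) hline
  · exact ContinuousAt.comp_of_eq hf.continuousAt hline hline_zero

end Calculus

section SecondOrderOperator

variable {ι E : Type*} [Fintype ι] [NormedAddCommGroup E] [NormedSpace ℝ E]

/-- The second-order linear differential operator `f ↦ ∑ᵢ D²f(vᵢ, vᵢ) + Df(b)` without zeroth-order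
term. -/
noncomputable def secondOrderOperator (v : ι → E → E) (b : E → E) (f : E → ℝ) (x : E) : ℝ :=
  ∑ i, fderiv ℝ (fderiv ℝ f) x (v i x) (v i x) + fderiv ℝ f x (b x)

variable {v : ι → E → E} {b : E → E} {f g : E → ℝ} {x : E}

theorem secondOrderOperator_sub (hf : ContDiffAt ℝ 2 f x) (hg : ContDiffAt ℝ 2 g x) :
    secondOrderOperator v b (fun y ↦ f y - g y) x =
      secondOrderOperator v b f x - secondOrderOperator v b g x := by
  have hfirst : fderiv ℝ (fun y ↦ f y - g y) =ᶠ[𝓝 x] fun y ↦ fderiv ℝ f y - fderiv ℝ g y := by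
    filter_upwards [hf.eventually (by simp), hg.eventually (by simp)] with y hfy hgy
    exact fderiv_fun_sub (hfy.differentiableAt two_ne_zero) (hgy.differentiableAt two_ne_zero)
  have hsecond : fderiv ℝ (fderiv ℝ fun y ↦ f y - g y) x =
      fderiv ℝ (fderiv ℝ f) x - fderiv ℝ (fderiv ℝ g) x := by
    rw [hfirst.fderiv_eq]
    exact fderiv_fun_sub (differentiableAt_fderiv_of_contDiffAt_two hf)
      (differentiableAt_fderiv_of_contDiffAt_two hg)
  simp only [secondOrderOperator, hsecond, hfirst.self_of_nhds, sub_apply,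
    Finset.sum_sub_distrib]
  ring

theorem secondOrderOperator_const_mul (c : ℝ) :
    secondOrderOperator v b (fun y ↦ c * f y) x = c * secondOrderOperator v b f x := by
  have hfirst : fderiv ℝ (fun y ↦ c * f y) = c • fderiv ℝ f := fderiv_const_smul_field c
  have hsecond : fderiv ℝ (c • fderiv ℝ f) x = c • fderiv ℝ (fderiv ℝ f) x :=
    congrFun (fderiv_const_smul_field (f := fderiv ℝ f) c) x
  simp [secondOrderOperator, hfirst, hsecond, Finset.mul_sum, mul_add]

theorem secondOrderOperator_nonneg_of_isLocalMin (hf : ContDiffAt ℝ 2 f x)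
    (hmin : IsLocalMin f x) : 0 ≤ secondOrderOperator v b f x := by
  rw [secondOrderOperator, hmin.fderiv_eq_zero, zero_apply, add_zero]
  exact Finset.sum_nonneg fun i _ ↦ fderiv_fderiv_nonneg_of_isLocalMin hf hmin (v i x)

theorem continuousAt_secondOrderOperator (hf : ContDiffAt ℝ 2 f x)
    (hv : ∀ i, ContinuousAt (v i) x) (hb : ContinuousAt b x) :
    ContinuousAt (secondOrderOperator v b f) x := by
  have hfirst : ContDiffAt ℝ 1 (fderiv ℝ f) x := hf.fderiv_right (by norm_num)
  have hsecond : ContDiffAt ℝ 0 (fderiv ℝ (fderiv ℝ f)) x := hfirst.fderiv_right (by norm_num)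
  exact (tendsto_finsetSum _ fun i _ ↦
    (hsecond.continuousAt.clm_apply (hv i)).clm_apply (hv i)).add
      (hfirst.continuousAt.clm_apply hb)

end SecondOrderOperator

section GaussianBarrier

variable {ι E : Type*} [Fintype ι] [NormedAddCommGroup E] [NormedSpace ℝ E] [FiniteDimensional ℝ E]

/-- Hopf's barrier function `exp (-α |x - c|²)`, in a Euclidean distance on `E`. -/
noncomputable def gaussianBarrier (α : ℝ) (c x : E) : ℝ := Real.exp (-α * Euclidean.dist x c ^ 2)

theorem gaussianBarrier_lt_gaussianBarrier {α : ℝ} (hα : 0 < α) {c x y : E}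
    (h : Euclidean.dist x c < Euclidean.dist y c) :
    gaussianBarrier α c y < gaussianBarrier α c x := by
  have hsq : Euclidean.dist x c ^ 2 < Euclidean.dist y c ^ 2 :=
    pow_lt_pow_left₀ h dist_nonneg two_ne_zero
  exact Real.exp_lt_exp.mpr (mul_lt_mul_of_neg_left hsq (neg_lt_zero.mpr hα))

theorem hasFDerivAt_euclideanDist_sq (c x : E) :
    HasFDerivAt (fun y ↦ Euclidean.dist y c ^ 2)
      (2 • (innerSL ℝ (toEuclidean x - toEuclidean c)).comp
        (toEuclidean (E := E) : E →L[ℝ] _)) x := by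
  simp only [Euclidean.dist, dist_eq_norm]
  exact (toEuclidean.hasFDerivAt.sub_const (toEuclidean c)).norm_sq

theorem contDiff_gaussianBarrier (α : ℝ) (c : E) {n : WithTop ℕ∞} :
    ContDiff ℝ n (gaussianBarrier α c) := by
  have hdist : ContDiff ℝ n fun x ↦ ‖toEuclidean x - toEuclidean c‖ ^ 2 :=
    (toEuclidean.contDiff.sub contDiff_const).norm_sq ℝ
  simp only [← dist_eq_norm] at hdist
  exact (contDiff_const.mul hdist).exp

theorem fderiv_gaussianBarrier_apply (α : ℝ) (c x v : E) :
    fderiv ℝ (gaussianBarrier α c) x v =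
      -2 * α * ⟪toEuclidean x - toEuclidean c, toEuclidean v⟫ * gaussianBarrier α c x := by
  have h := ((hasFDerivAt_euclideanDist_sq c x).const_mul (-α)).exp.fderiv
  change fderiv ℝ (gaussianBarrier α c) x = _ at h
  rw [h]
  simp only [gaussianBarrier, smul_apply, ContinuousLinearMap.comp_apply, innerSL_apply_apply,
    ContinuousLinearEquiv.coe_coe, smul_eq_mul, nsmul_eq_mul, Nat.cast_ofNat]
  ring

theorem fderiv_fderiv_gaussianBarrier_apply_self (α : ℝ) (c x v : E) :
    fderiv ℝ (fderiv ℝ (gaussianBarrier α c)) x v v =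
      (4 * α ^ 2 * ⟪toEuclidean x - toEuclidean c, toEuclidean v⟫ ^ 2 -
        2 * α * ‖toEuclidean v‖ ^ 2) * gaussianBarrier α c x := by
  have hbarrier : HasFDerivAt (gaussianBarrier α c) (fderiv ℝ (gaussianBarrier α c) x) x :=
    ((contDiff_gaussianBarrier α c).differentiable one_ne_zero x).hasFDerivAt
  have hinner : HasFDerivAt (fun y ↦ ⟪toEuclidean y - toEuclidean c, toEuclidean v⟫)
      ((innerSL ℝ (toEuclidean v)).comp
        (toEuclidean (E := E) : E →L[ℝ] _)) x := by
    simp only [real_inner_comm]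
    exact (innerSL ℝ (toEuclidean v)).hasFDerivAt.comp x
      (toEuclidean.hasFDerivAt.sub_const (toEuclidean c))
  rw [← fderiv_fderiv_apply_const (contDiff_gaussianBarrier α c).contDiffAt]
  simp only [fderiv_gaussianBarrier_apply]
  rw [((hinner.const_mul (-2 * α)).fun_mul hbarrier).fderiv]
  simp only [add_apply, smul_apply, ContinuousLinearMap.comp_apply, innerSL_apply_apply,
    ContinuousLinearEquiv.coe_coe, smul_eq_mul, fderiv_gaussianBarrier_apply,
    real_inner_self_eq_norm_sq]
  ring

theorem secondOrderOperator_gaussianBarrier (v : ι → E → E) (b : E → E) (α : ℝ) (c x : E) :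
    secondOrderOperator v b (gaussianBarrier α c) x =
      2 * α * (2 * α * ∑ i, ⟪toEuclidean x - toEuclidean c, toEuclidean (v i x)⟫ ^ 2 -
        (∑ i, ‖toEuclidean (v i x)‖ ^ 2 + ⟪toEuclidean x - toEuclidean c, toEuclidean (b x)⟫)) *
        gaussianBarrier α c x := by
  simp only [secondOrderOperator, fderiv_fderiv_gaussianBarrier_apply_self,
    fderiv_gaussianBarrier_apply, ← Finset.sum_mul, Finset.sum_sub_distrib, ← Finset.mul_sum]
  ring

theorem sum_inner_sq_pos {F : Type*} [NormedAddCommGroup F] [InnerProductSpace ℝ F] {s : ι → F}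
    (hs : Submodule.span ℝ (range s) = ⊤) {ξ : F} (hξ : ξ ≠ 0) : 0 < ∑ i, ⟪ξ, s i⟫ ^ 2 := by
  refine (Finset.sum_nonneg fun i _ ↦ sq_nonneg _).lt_of_ne' fun hsum ↦ hξ ?_
  have horth (i : ι) : ⟪ξ, s i⟫ = 0 := by
    simpa using (Finset.sum_eq_zero_iff_of_nonneg fun i _ ↦ sq_nonneg _).mp hsum i
      (Finset.mem_univ i)
  have hinner : innerₛₗ ℝ ξ = 0 := LinearMap.ext_on_range hs (by simpa using horth)
  exact inner_self_eq_zero.mp (LinearMap.congr_fun hinner ξ)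

theorem exists_secondOrderOperator_gaussianBarrier_pos {v : ι → E → E} (b : E → E) {c x : E}
    (hspan : Submodule.span ℝ (range fun i ↦ v i x) = ⊤) (hc : c ≠ x) :
    ∃ α > 0, 0 < secondOrderOperator v b (gaussianBarrier α c) x := by
  have hspan' : Submodule.span ℝ (range fun i ↦ toEuclidean (v i x)) = ⊤ := by
    have := congrArg (Submodule.map (toEuclidean (E := E)).toLinearMap) hspan
    simpa [Submodule.map_span, ← range_comp, Function.comp_def] using this
  have hpos := sum_inner_sq_pos hspan' (sub_ne_zero.mpr (toEuclidean.injective.ne hc.symm))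
  simp only [secondOrderOperator_gaussianBarrier]
  set S := ∑ i, ⟪toEuclidean x - toEuclidean c, toEuclidean (v i x)⟫ ^ 2
  set B := ∑ i, ‖toEuclidean (v i x)‖ ^ 2 + ⟪toEuclidean x - toEuclidean c, toEuclidean (b x)⟫
  have hα : 0 < (|B| + 1) / S := by positivity
  have hdominates : 0 < 2 * ((|B| + 1) / S) * S - B := by
    rw [mul_assoc, div_mul_cancel₀ _ hpos.ne']
    linarith [le_abs_self B, abs_nonneg B]
  exact ⟨_, hα, mul_pos (mul_pos (by positivity) hdominates) (Real.exp_pos _)⟩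

end GaussianBarrier

section Perturbation

variable {X : Type*} [TopologicalSpace X] [LocallyCompactSpace X]

theorem eventually_exists_isLocalMin_sub_mul {w h : X → ℝ} {z : X} {U : Set X} (hU : U ∈ 𝓝 z)
    (hw : ∀ᶠ y in 𝓝 z, ContinuousAt w y) (hh : ∀ᶠ y in 𝓝 z, ContinuousAt h y)
    (hmin : IsLocalMin w z) (hstrict : ∀ᶠ y in 𝓝[≠] z, w y = w z → h y < h z) :
    ∀ᶠ ε in 𝓝[>] (0 : ℝ), ∃ y ∈ U, IsLocalMin (fun x ↦ w x - ε * h x) y := by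
  obtain ⟨V, hVz, hV⟩ := eventually_iff_exists_mem.mp
    (hw.and <| hh.and <| hmin.eventually_nhds.and (eventually_nhdsWithin_iff.mp hstrict))
  obtain ⟨K, hKz, hKUV, hK⟩ := local_compact_nhds (inter_mem hU hVz)
  have hdominates : ∀ᶠ ε in 𝓝 (0 : ℝ), ∀ y ∈ K \ interior K,
      0 < ε → w z - ε * h z < w y - ε * h y := by
    refine (hK.diff isOpen_interior).eventually_forall_of_forall_eventually fun y hy ↦ ?_
    obtain ⟨hwy, hhy, hminy, hstricty⟩ := hV y (hKUV hy.1).2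
    have hyz : y ≠ z := by
      rintro rfl
      exact hy.2 (mem_interior_iff_mem_nhds.mpr hKz)
    have hsnd : Tendsto Prod.snd (𝓝 ((0 : ℝ), y)) (𝓝 y) := continuous_snd.tendsto _
    rcases hminy.self_of_nhds.lt_or_eq with hlt | heq
    · have hleft : ContinuousAt (fun q : ℝ × X ↦ w z - q.1 * h z) (0, y) := by fun_prop
      have hright : ContinuousAt (fun q : ℝ × X ↦ w q.2 - q.1 * h q.2) (0, y) :=
        (hwy.tendsto.comp hsnd).sub (continuousAt_fst.mul (hhy.tendsto.comp hsnd))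
      filter_upwards [hleft.eventually_lt hright (by simpa using hlt)] with q hq _ using hq
    · filter_upwards [hsnd.eventually hminy,
        hsnd.eventually (hhy.eventually_lt_const (hstricty hyz heq.symm))] with q hwq hhq hpos
      linarith [mul_lt_mul_of_pos_left hhq hpos]
  filter_upwards [nhdsWithin_le_nhds hdominates, self_mem_nhdsWithin] with ε hε hpos
  have hcont : ContinuousOn (fun x ↦ w x - ε * h x) K := fun y hy ↦
    have hy := hV y (hKUV hy).2
    (hy.1.sub (hy.2.1.const_mul ε)).continuousWithinAt
  obtain ⟨y, hy, hymin⟩ := hK.exists_isLocalMin_mem_open interior_subset hcont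
    (mem_of_mem_nhds hKz) (fun y hy ↦ hε y hy hpos) isOpen_interior
  exact ⟨y, (hKUV (interior_subset hy)).1, hymin⟩

end Perturbation

section TouchingBall

theorem dist_midpoint_lt_dist_midpoint {F : Type*} [NormedAddCommGroup F] [InnerProductSpace ℝ F]
    {x y z : F} (hle : dist z x ≤ dist y x) (hne : y ≠ z) :
    dist z (midpoint ℝ x z) < dist y (midpoint ℝ x z) := by
  have hapollonius :=
    EuclideanGeometry.dist_sq_add_dist_sq_eq_two_mul_dist_midpoint_sq_add_half_dist_sq y x z
  have hz : dist z (midpoint ℝ x z) = dist z x / 2 := by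
    rw [dist_right_midpoint, Real.norm_ofNat, dist_comm, inv_mul_eq_div]
  have hsq : dist z x ^ 2 ≤ dist y x ^ 2 := pow_le_pow_left₀ dist_nonneg hle 2
  have hyz : 0 < dist y z ^ 2 := pow_pos (dist_pos.mpr hne) 2
  rw [dist_comm x z] at hapollonius
  rw [hz]
  refine lt_of_pow_lt_pow_left₀ 2 dist_nonneg ?_
  linarith

variable {E : Type*} [NormedAddCommGroup E] [NormedSpace ℝ E] [FiniteDimensional ℝ E]

theorem exists_eventually_euclideanDist_lt_of_not_isOpen {C : Set E} (hC : IsLocallyClosed C)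
    (hopen : ¬IsOpen C) : ∃ z ∈ C, ∃ c ≠ z, ∀ᶠ y in 𝓝[≠] z,
      y ∈ C → Euclidean.dist z c < Euclidean.dist y c := by
  obtain ⟨U, Z, hU, hZ, rfl⟩ := hC
  obtain ⟨p, hpC, hp⟩ : ∃ p ∈ U ∩ Z, U ∩ Z ∉ 𝓝 p := by
    simpa only [isOpen_iff_mem_nhds, not_forall, exists_prop] using hopen
  obtain ⟨R, hR, hRU⟩ := Euclidean.nhds_basis_closedBall.mem_iff.mp (hU.mem_nhds hpC.1)
  obtain ⟨x, hxC, hx⟩ : ∃ x, x ∉ U ∩ Z ∧ Euclidean.dist x p < R / 2 :=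
    ((Filter.not_eventually.mp hp).and_eventually (Euclidean.ball_mem_nhds (half_pos hR))).exists
  have hcompact : IsCompact (Euclidean.closedBall p R ∩ Z) :=
    Euclidean.isCompact_closedBall.inter_right hZ
  have hcont : Continuous fun y ↦ Euclidean.dist y x := toEuclidean.continuous.dist continuous_const
  have hpK : p ∈ Euclidean.closedBall p R ∩ Z :=
    ⟨mem_of_mem_nhds (Euclidean.closedBall_mem_nhds hR), hpC.2⟩
  obtain ⟨z, ⟨hzp, hzZ⟩, hnearest⟩ := hcompact.exists_isMinOn ⟨p, hpK⟩ hcont.continuousOn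
  have hzC : z ∈ U ∩ Z := ⟨hRU hzp, hzZ⟩
  have hzR : Euclidean.dist z p < R := by
    have htriangle : Euclidean.dist z p ≤ Euclidean.dist z x + Euclidean.dist x p :=
      dist_triangle _ _ _
    have hzx : Euclidean.dist z x ≤ Euclidean.dist x p :=
      (hnearest hpK).trans_eq (dist_comm _ _)
    linarith
  have hxz : x ≠ z := fun h ↦ hxC (h ▸ hzC)
  -- Replacing the ball around `x` by the one with diameter `x z` makes the contact point unique.
  refine ⟨z, hzC, toEuclidean.symm (midpoint ℝ (toEuclidean x) (toEuclidean z)), ?_, ?_⟩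
  · simpa [ContinuousLinearEquiv.symm_apply_eq] using hxz
  filter_upwards [self_mem_nhdsWithin,
    mem_nhdsWithin_of_mem_nhds (Euclidean.isOpen_ball.mem_nhds hzR)] with y hyz hyR hyC
  have hle : Euclidean.dist z x ≤ Euclidean.dist y x :=
    hnearest ⟨Euclidean.ball_subset_closedBall hyR, hyC.2⟩
  simpa [Euclidean.dist] using
    dist_midpoint_lt_dist_midpoint hle (toEuclidean.injective.ne hyz)

end TouchingBall

section LevelSets

variable {X Y : Type*} [TopologicalSpace X] [TopologicalSpace Y] {f : X → Y} {s : Set X}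

theorem isLocallyClosed_inter_preimage (hf : ContinuousOn f s) (hs : IsLocallyClosed s)
    {t : Set Y} (ht : IsClosed t) : IsLocallyClosed (s ∩ f ⁻¹' t) := by
  obtain ⟨Z, hZ, hst⟩ := continuousOn_iff_isClosed.mp hf t ht
  rw [inter_comm, hst, inter_comm]
  exact hs.inter hZ.isLocallyClosed

theorem eqOn_const_of_isOpen_inter_preimage [T1Space Y] (hconn : IsPreconnected s)
    (hs : IsOpen s) (hf : ContinuousOn f s) {x : X} (hx : x ∈ s)
    (hopen : IsOpen (s ∩ f ⁻¹' {f x})) : EqOn f (fun _ ↦ f x) s := by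
  have hcompl : IsOpen (s ∩ f ⁻¹' {f x}ᶜ) := hf.isOpen_inter_preimage hs isOpen_compl_singleton
  have hdisj : Disjoint (s ∩ f ⁻¹' {f x}) (s ∩ f ⁻¹' {f x}ᶜ) :=
    (disjoint_compl_right.preimage f).mono inter_subset_right inter_subset_right
  have hcover : s ⊆ s ∩ f ⁻¹' {f x} ∪ s ∩ f ⁻¹' {f x}ᶜ := by
    rw [← inter_union_distrib_left, ← preimage_union, union_compl_self, preimage_univ, inter_univ]
  have hsub := hconn.subset_left_of_subset_union hopen hcompl hdisj hcover ⟨x, hx, hx, rfl⟩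
  exact fun y hy ↦ (hsub hy).2

end LevelSets

section StrongMinimumPrinciple

variable {ι E : Type*} [Fintype ι] [NormedAddCommGroup E] [NormedSpace ℝ E] [FiniteDimensional ℝ E]
  {v : ι → E → E} {b : E → E} {w : E → ℝ}

theorem frequently_euclideanDist_le_of_secondOrderOperator_nonpos {z c : E}
    (hw : ContDiffAt ℝ 2 w z) (hv : ∀ i, ContinuousAt (v i) z) (hb : ContinuousAt b z)
    (hspan : Submodule.span ℝ (range fun i ↦ v i z) = ⊤)
    (hsuper : ∀ᶠ y in 𝓝 z, secondOrderOperator v b w y ≤ 0) (hmin : IsLocalMin w z)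
    (hc : c ≠ z) :
    ∃ᶠ y in 𝓝[≠] z, w y = w z ∧ Euclidean.dist y c ≤ Euclidean.dist z c := by
  intro htouch
  obtain ⟨α, hα, hpos⟩ := exists_secondOrderOperator_gaussianBarrier_pos b hspan hc
  have hbarrier (y : E) : ContDiffAt ℝ 2 (gaussianBarrier α c) y :=
    (contDiff_gaussianBarrier α c).contDiffAt
  have hsub : ∀ᶠ y in 𝓝 z, 0 < secondOrderOperator v b (gaussianBarrier α c) y :=
    (continuousAt_secondOrderOperator (hbarrier z) hv hb).eventually_const_lt hpos
  have hw_near : ∀ᶠ y in 𝓝 z, ContDiffAt ℝ 2 w y := hw.eventually (by simp)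
  have hperturb := eventually_exists_isLocalMin_sub_mul (hw_near.and <| hsub.and hsuper)
    (hw_near.mono fun _ h ↦ h.continuousAt) (.of_forall fun y ↦ (hbarrier y).continuousAt) hmin
    (htouch.mono fun y hy hwy ↦ gaussianBarrier_lt_gaussianBarrier hα
      (not_le.mp fun hdist ↦ hy ⟨hwy, hdist⟩))
  obtain ⟨ε, ⟨y, ⟨hwy, hsuby, hsupery⟩, hymin⟩, hε_pos⟩ :=
    (hperturb.and self_mem_nhdsWithin).exists
  have hεbarrier : ContDiffAt ℝ 2 (fun x ↦ ε * gaussianBarrier α c x) y :=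
    contDiffAt_const.mul (hbarrier y)
  have hnonneg := secondOrderOperator_nonneg_of_isLocalMin (v := v) (b := b)
    (hwy.sub hεbarrier) hymin
  rw [secondOrderOperator_sub hwy hεbarrier, secondOrderOperator_const_mul] at hnonneg
  linarith [mul_pos (mem_Ioi.mp hε_pos) hsuby]

theorem eqOn_const_of_secondOrderOperator_nonpos {Ω : Set E} (hΩ : IsOpen Ω)
    (hconn : IsPreconnected Ω) (hw : ContDiffOn ℝ 2 w Ω) (hv : ∀ i, ContinuousOn (v i) Ω)
    (hb : ContinuousOn b Ω) (hspan : ∀ x ∈ Ω, Submodule.span ℝ (range fun i ↦ v i x) = ⊤)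
    (hsuper : ∀ x ∈ Ω, secondOrderOperator v b w x ≤ 0) {p : E} (hp : p ∈ Ω)
    (hmin : IsMinOn w Ω p) : EqOn w (fun _ ↦ w p) Ω := by
  refine eqOn_const_of_isOpen_inter_preimage hconn hΩ hw.continuousOn hp (by_contra fun hopen ↦ ?_)
  obtain ⟨z, ⟨hz, hwz⟩, c, hc, htouch⟩ := exists_eventually_euclideanDist_lt_of_not_isOpen
    (isLocallyClosed_inter_preimage hw.continuousOn hΩ.isLocallyClosed isClosed_singleton) hopen
  have hΩz : Ω ∈ 𝓝 z := hΩ.mem_nhds hz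
  have hminz : IsLocalMin w z :=
    mem_of_superset hΩz fun y hy ↦ (show w z = w p from hwz).trans_le (hmin hy)
  refine frequently_euclideanDist_le_of_secondOrderOperator_nonpos (hw.contDiffAt hΩz)
    (fun i ↦ (hv i).continuousAt hΩz) (hb.continuousAt hΩz) (hspan z hz)
    (eventually_of_mem hΩz hsuper) hminz hc ?_
  filter_upwards [htouch, mem_nhdsWithin_of_mem_nhds hΩz] with y hlt hy ⟨hwy, hle⟩
  exact (hlt ⟨hy, hwy.trans hwz⟩).not_ge hle

end StrongMinimumPrinciple

section MinimalSurfaceEquation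

variable {u u₁ u₂ : ℝ × ℝ → ℝ} {x : ℝ × ℝ} {m n : WithTop ℕ∞}

theorem contDiffAt_pdx (hu : ContDiffAt ℝ n u x) (hmn : m + 1 ≤ n) : ContDiffAt ℝ m (pdx u) x :=
  (hu.fderiv_right hmn).clm_apply contDiffAt_const

theorem contDiffAt_pdy (hu : ContDiffAt ℝ n u x) (hmn : m + 1 ≤ n) : ContDiffAt ℝ m (pdy u) x :=
  (hu.fderiv_right hmn).clm_apply contDiffAt_const

theorem fderiv_apply_eq_pdx_add_pdy (u : ℝ × ℝ → ℝ) (x v : ℝ × ℝ) :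
    fderiv ℝ u x v = v.1 * pdx u x + v.2 * pdy u x := by
  have hv : v = v.1 • (1, 0) + v.2 • (0, 1) := by ext <;> simp
  conv_lhs => rw [hv]
  simp only [map_add, map_smul, smul_eq_mul, pdx, pdy]

theorem fderiv_fderiv_apply_self_eq (hu : ContDiffAt ℝ 2 u x) (v : ℝ × ℝ) :
    fderiv ℝ (fderiv ℝ u) x v v =
      v.1 ^ 2 * pdx (pdx u) x + 2 * v.1 * v.2 * pdy (pdx u) x + v.2 ^ 2 * pdy (pdy u) x := by
  have hx : DifferentiableAt ℝ (pdx u) x :=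
    (contDiffAt_pdx (m := 1) hu (by norm_num)).differentiableAt one_ne_zero
  have hy : DifferentiableAt ℝ (pdy u) x :=
    (contDiffAt_pdy (m := 1) hu (by norm_num)).differentiableAt one_ne_zero
  have hsymm : pdx (pdy u) x = pdy (pdx u) x := by
    have h := hu.isSymmSndFDerivAt (by simp) (1, 0) (0, 1)
    rwa [← fderiv_fderiv_apply_const hu, ← fderiv_fderiv_apply_const hu] at h
  rw [← fderiv_fderiv_apply_const hu]
  simp only [fderiv_apply_eq_pdx_add_pdy u]
  rw [fderiv_fun_add (hx.const_mul _) (hy.const_mul _), fderiv_const_mul hx, fderiv_const_mul hy]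
  simp only [add_apply, smul_apply, smul_eq_mul,
    fderiv_apply_eq_pdx_add_pdy (pdx u), fderiv_apply_eq_pdx_add_pdy (pdy u), hsymm]
  ring

/-- The left-hand side of the minimal surface equation: the mean curvature of the graph of `u`,
up to a positive factor. -/
noncomputable def minimalSurfaceOperator (u : ℝ × ℝ → ℝ) (x : ℝ × ℝ) : ℝ :=
  (1 + pdy u x ^ 2) * pdx (pdx u) x - 2 * pdx u x * pdy u x * pdy (pdx u) x
    + (1 + pdx u x ^ 2) * pdy (pdy u) x

/-- Vector fields whose squares sum to the principal part of the minimal surface operator at `u`: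
`(1 + u_y²) ∂ₓ² - 2 u_x u_y ∂ₓ∂_y + (1 + u_x²) ∂_y² = ∂ₓ² + ∂_y² + (u_y ∂ₓ - u_x ∂_y)²`, the
coefficients being frozen when squaring. -/
noncomputable def minimalSurfaceFrame (u : ℝ × ℝ → ℝ) : Fin 3 → ℝ × ℝ → ℝ × ℝ :=
  ![fun _ ↦ (1, 0), fun _ ↦ (0, 1), fun x ↦ (pdy u x, -pdx u x)]

/-- The first-order coefficients of the linear operator satisfied by `u₂ - u₁`. They come from
differencing the coefficients multiplying the second derivatives of `u₁`. -/
noncomputable def minimalSurfaceDrift (u₁ u₂ : ℝ × ℝ → ℝ) (x : ℝ × ℝ) : ℝ × ℝ :=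
  ((pdx u₁ x + pdx u₂ x) * pdy (pdy u₁) x - 2 * pdy u₁ x * pdy (pdx u₁) x,
    (pdy u₁ x + pdy u₂ x) * pdx (pdx u₁) x - 2 * pdx u₂ x * pdy (pdx u₁) x)

theorem span_range_minimalSurfaceFrame (u : ℝ × ℝ → ℝ) (x : ℝ × ℝ) :
    Submodule.span ℝ (range fun i ↦ minimalSurfaceFrame u i x) = ⊤ := by
  refine eq_top_iff.mpr fun y _ ↦ ?_
  have hy : y = y.1 • minimalSurfaceFrame u 0 x + y.2 • minimalSurfaceFrame u 1 x := by
    ext <;> simp [minimalSurfaceFrame]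
  rw [hy]
  exact add_mem (Submodule.smul_mem _ _ (Submodule.subset_span ⟨0, rfl⟩))
    (Submodule.smul_mem _ _ (Submodule.subset_span ⟨1, rfl⟩))

theorem continuousAt_minimalSurfaceFrame (hu : ContDiffAt ℝ 1 u x) (i : Fin 3) :
    ContinuousAt (minimalSurfaceFrame u i) x := by
  have hx : ContinuousAt (pdx u) x := (contDiffAt_pdx (m := 0) hu (by norm_num)).continuousAt
  have hy : ContinuousAt (pdy u) x := (contDiffAt_pdy (m := 0) hu (by norm_num)).continuousAt
  fin_cases i
  · exact continuousAt_const
  · exact continuousAt_const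
  · exact hy.prodMk hx.neg

theorem continuousAt_minimalSurfaceDrift (hu₁ : ContDiffAt ℝ 2 u₁ x) (hu₂ : ContDiffAt ℝ 1 u₂ x) :
    ContinuousAt (minimalSurfaceDrift u₁ u₂) x := by
  have hx₁ : ContDiffAt ℝ 1 (pdx u₁) x := contDiffAt_pdx hu₁ (by norm_num)
  have hy₁ : ContDiffAt ℝ 1 (pdy u₁) x := contDiffAt_pdy hu₁ (by norm_num)
  have hx₂ : ContDiffAt ℝ 0 (pdx u₂) x := contDiffAt_pdx hu₂ (by norm_num)
  have hy₂ : ContDiffAt ℝ 0 (pdy u₂) x := contDiffAt_pdy hu₂ (by norm_num)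
  have hxx₁ : ContDiffAt ℝ 0 (pdx (pdx u₁)) x := contDiffAt_pdx hx₁ (by norm_num)
  have hxy₁ : ContDiffAt ℝ 0 (pdy (pdx u₁)) x := contDiffAt_pdy hx₁ (by norm_num)
  have hyy₁ : ContDiffAt ℝ 0 (pdy (pdy u₁)) x := contDiffAt_pdy hy₁ (by norm_num)
  replace hx₁ := hx₁.of_le zero_le_one
  replace hy₁ := hy₁.of_le zero_le_one
  refine ContDiffAt.continuousAt (𝕜 := ℝ) (n := 0) ?_
  unfold minimalSurfaceDrift
  fun_prop

theorem secondOrderOperator_minimalSurface_sub (hu₁ : ContDiffAt ℝ 2 u₁ x)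
    (hu₂ : ContDiffAt ℝ 2 u₂ x) :
    secondOrderOperator (minimalSurfaceFrame u₂) (minimalSurfaceDrift u₁ u₂)
        (fun y ↦ u₂ y - u₁ y) x =
      minimalSurfaceOperator u₂ x - minimalSurfaceOperator u₁ x := by
  rw [secondOrderOperator_sub hu₂ hu₁]
  simp only [secondOrderOperator, Fin.sum_univ_three, fderiv_fderiv_apply_self_eq hu₁,
    fderiv_fderiv_apply_self_eq hu₂, fderiv_apply_eq_pdx_add_pdy, minimalSurfaceFrame,
    minimalSurfaceDrift, minimalSurfaceOperator, Matrix.cons_val]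
  ring

theorem interior_maximum_principle_for_minimal_graphs_general {Ω : Set (ℝ × ℝ)} (hΩ : IsOpen Ω)
    (hconn : IsPreconnected Ω) (h₁ : ContDiffOn ℝ 2 u₁ Ω) (h₂ : ContDiffOn ℝ 2 u₂ Ω)
    (hsub : ∀ q ∈ Ω, 0 ≤ minimalSurfaceOperator u₁ q)
    (hsuper : ∀ q ∈ Ω, minimalSurfaceOperator u₂ q ≤ 0) (hle : ∀ q ∈ Ω, u₁ q ≤ u₂ q)
    {p : ℝ × ℝ} (hp : p ∈ Ω) (heq : u₁ p = u₂ p) : EqOn u₁ u₂ Ω := by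
  have hu₁ {x : ℝ × ℝ} (hx : x ∈ Ω) : ContDiffAt ℝ 2 u₁ x := h₁.contDiffAt (hΩ.mem_nhds hx)
  have hu₂ {x : ℝ × ℝ} (hx : x ∈ Ω) : ContDiffAt ℝ 2 u₂ x := h₂.contDiffAt (hΩ.mem_nhds hx)
  have hmin : IsMinOn (fun y ↦ u₂ y - u₁ y) Ω p := fun x hx ↦ by simpa [heq] using hle x hx
  have hconst := eqOn_const_of_secondOrderOperator_nonpos hΩ hconn (h₂.sub h₁)
    (fun i x hx ↦ (continuousAt_minimalSurfaceFrame ((hu₂ hx).of_le one_le_two)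
      i).continuousWithinAt)
    (fun x hx ↦ (continuousAt_minimalSurfaceDrift (hu₁ hx)
      ((hu₂ hx).of_le one_le_two)).continuousWithinAt)
    (fun x _ ↦ span_range_minimalSurfaceFrame u₂ x)
    (fun x hx ↦ by
      rw [secondOrderOperator_minimalSurface_sub (hu₁ hx) (hu₂ hx)]
      exact sub_nonpos.mpr ((hsuper x hx).trans (hsub x hx)))
    hp hmin
  exact fun x hx ↦ (sub_eq_zero.mp ((hconst hx).trans (sub_eq_zero.mpr heq.symm))).symm

end MinimalSurfaceEquation

/-- Interior maximum principle for minimal graphs: if two solutions of the minimal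
surface equation on an open connected set satisfy `u₁ ≤ u₂` and touch at an interior
point, they coincide. -/
theorem interior_maximum_principle_for_minimal_graphs
    (Ω : Set (ℝ × ℝ)) (hΩ : IsOpen Ω) (hconn : IsConnected Ω)
    (u₁ u₂ : ℝ × ℝ → ℝ)
    (h₁ : ContDiffOn ℝ 2 u₁ Ω) (h₂ : ContDiffOn ℝ 2 u₂ Ω)
    (hmse₁ : SatisfiesMinimalSurfaceEquation u₁ Ω)
    (hmse₂ : SatisfiesMinimalSurfaceEquation u₂ Ω)
    (hle : ∀ p ∈ Ω, u₁ p ≤ u₂ p)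
    (p : ℝ × ℝ) (hp : p ∈ Ω) (heq : u₁ p = u₂ p) :
    Set.EqOn u₁ u₂ Ω :=
  interior_maximum_principle_for_minimal_graphs_general hΩ hconn.isPreconnected h₁ h₂
    (fun q hq ↦ (hmse₁ q hq).ge) (fun q hq ↦ (hmse₂ q hq).le) hle hp heq
end

section
/- (Bernstein's theorem) Let u : ℝ² → ℝ be a C² function satisfying the minimal surface equation on all of ℝ². Then u is affine: there exist a, b, c ∈ ℝ such that u(x, y) = a·x + b·y + c for all (x, y) ∈ ℝ². -/
/-!
Write `p = u_x`, `q = u_y` and `W = √(1 + p² + q²)`. The minimal surface equation says that the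
forms `((1 + p²) dx + pq dy) / W` and `(pq dx + (1 + q²) dy) / W` are closed, so integrating twice
gives a function `φ` whose Hessian is the first fundamental form of the graph divided by `W`; the
Hessian determinant of `φ` is `1`. By Jörgens' theorem the Hessian of `φ` is then constant, which
determines `p²` and `q²`, and so, by continuity, `p` and `q`.

For Jörgens' theorem we may assume `φ` convex. Lewy's map `z ↦ z + ∇φ(z)` then does not decrease
distances, so it is a global change of coordinates onto `ℂ`. In the new coordinate the conjugate of
`z - ∇φ(z)` is an entire function whose derivative has modulus less than `1`; by Liouville's
theorem this derivative is constant, and it determines the Hessian of `φ`.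
-/

open Filter Topology Set Module
open scoped NNReal

section Antilipschitz

theorem isClosed_range_of_continuous_of_antilipschitzWith {X Y : Type*} [PseudoMetricSpace X]
    [CompleteSpace X] [MetricSpace Y] {K : ℝ≥0} {f : X → Y} (hf : Continuous f)
    (hK : AntilipschitzWith K f) : IsClosed (range f) := by
  refine isClosed_of_closure_subset fun y hy => ?_
  have : NeBot (comap f (𝓝 y)) :=
    comap_neBot_iff_frequently.2 (mem_closure_iff_frequently.1 hy)
  have hcauchy : Cauchy (comap f (𝓝 y)) := cauchy_nhds.comap hK.comap_uniformity_le
  obtain ⟨x, hx⟩ := CompleteSpace.complete hcauchy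
  exact ⟨x, tendsto_nhds_unique ((hf.tendsto x).mono_left hx) tendsto_comap⟩

variable {E F : Type*} [NormedAddCommGroup E] [NormedSpace ℝ E] [NormedAddCommGroup F]
  [NormedSpace ℝ F] {K : ℝ≥0} {T : E → F}

theorem injective_of_hasFDerivAt_of_antilipschitzWith {T' : E →L[ℝ] F} {z : E}
    (hT : HasFDerivAt T T' z) (hK : AntilipschitzWith K T) : Function.Injective T' := by
  refine (injective_iff_map_eq_zero T').2 fun v hv => ?_
  have hline : HasDerivAt (fun τ : ℝ => z + τ • v) v 0 := by
    simpa using ((hasDerivAt_id (0 : ℝ)).smul_const v).const_add z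
  have hTline : HasDerivAt (fun τ : ℝ => T (z + τ • v)) 0 0 := by
    have hT0 : HasFDerivAt T T' (z + (0 : ℝ) • v) := by simpa using hT
    simpa [hv] using! hT0.comp_hasDerivAt 0 hline
  have hline' : HasDerivAt (fun τ : ℝ => z + τ • v) 0 0 := by
    rw [hasDerivAt_iff_isLittleO] at hTline ⊢
    refine Asymptotics.IsBigO.trans_isLittleO (.of_bound K (.of_forall fun τ => ?_)) hTline
    simpa [dist_eq_norm] using hK.le_mul_dist (z + τ • v) (z + (0 : ℝ) • v)
  exact hline.unique hline'

theorem exists_equiv_hasStrictFDerivAt [FiniteDimensional ℝ E] [FiniteDimensional ℝ F]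
    (hEF : finrank ℝ E = finrank ℝ F) (hT : ContDiff ℝ 1 T) (hK : AntilipschitzWith K T) (z : E) :
    ∃ e : E ≃L[ℝ] F, HasStrictFDerivAt T (e : E →L[ℝ] F) z := by
  have hTz : HasStrictFDerivAt T (fderiv ℝ T z) z := hT.contDiffAt.hasStrictFDerivAt one_ne_zero
  have hinj := injective_of_hasFDerivAt_of_antilipschitzWith hTz.hasFDerivAt hK
  let e := LinearMap.linearEquivOfInjective (fderiv ℝ T z : E →ₗ[ℝ] F) hinj hEF
  exact ⟨e.toContinuousLinearEquiv, hTz⟩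

theorem surjective_of_contDiff_of_antilipschitzWith [FiniteDimensional ℝ E] [FiniteDimensional ℝ F]
    (hEF : finrank ℝ E = finrank ℝ F) (hT : ContDiff ℝ 1 T) (hK : AntilipschitzWith K T) :
    Function.Surjective T := by
  have : CompleteSpace E := FiniteDimensional.complete ℝ E
  have hopen : IsOpenMap T := isOpenMap_iff_nhds_le.2 fun z => by
    obtain ⟨e, he⟩ := exists_equiv_hasStrictFDerivAt hEF hT hK z
    exact he.map_nhds_eq_of_equiv.ge
  have hclosed := isClosed_range_of_continuous_of_antilipschitzWith hT.continuous hK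
  exact range_eq_univ.1 (IsClopen.eq_univ ⟨hclosed, hopen.isOpen_range⟩ (range_nonempty T))

end Antilipschitz

/- In the coordinate `ζ = T z` the function `S` is entire with derivative `c`, to which Liouville's
theorem applies. -/
theorem apply_eq_apply_of_fderiv_eq_smul_fderiv {E : Type*} [NormedAddCommGroup E]
    [NormedSpace ℝ E] (hE : finrank ℝ E = 2) {K : ℝ≥0} {T S c : E → ℂ} (hT : ContDiff ℝ 1 T)
    (hK : AntilipschitzWith K T) (hS : Differentiable ℝ S)
    (hST : ∀ z, fderiv ℝ S z = c z • fderiv ℝ T z) (hc : Bornology.IsBounded (range c)) (z w : E) :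
    c z = c w := by
  have : FiniteDimensional ℝ E := finite_of_finrank_eq_succ hE
  have hdim : finrank ℝ E = finrank ℝ ℂ := hE.trans Complex.finrank_real_complex.symm
  obtain ⟨g, hg⟩ := (surjective_of_contDiff_of_antilipschitzWith hdim hT hK).hasRightInverse
  have hgT : ∀ z, g (T z) = z := fun z => hK.injective (hg _)
  have hgc : Continuous g := LipschitzWith.continuous (hK.to_rightInverse hg)
  have hderiv : ∀ ζ, HasDerivAt (S ∘ g) (c (g ζ)) ζ := fun ζ => by
    obtain ⟨e, he⟩ := exists_equiv_hasStrictFDerivAt hdim hT hK (g ζ)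
    have hgζ : HasFDerivAt g (e.symm : ℂ →L[ℝ] E) ζ :=
      he.hasFDerivAt.of_local_left_inverse hgc.continuousAt (.of_forall hg)
    refine hasFDerivAt_of_restrictScalars ℝ ((hS (g ζ)).hasFDerivAt.comp ζ hgζ) ?_
    ext1 v
    simp [hST, he.hasFDerivAt.fderiv, mul_comm]
  have hdiff : Differentiable ℂ (c ∘ g) := by
    have hSg : Differentiable ℂ (S ∘ g) := fun ζ => (hderiv ζ).differentiableAt
    rw [show c ∘ g = deriv (S ∘ g) from funext fun ζ => (hderiv ζ).deriv.symm]
    exact (hSg.contDiff (n := 2)).differentiable_deriv_two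
  simpa [hgT] using
    hdiff.apply_eq_apply_of_bounded (hc.subset (range_comp_subset_range g c)) (T z) (T w)

theorem apply_sub_apply_nonneg_of_fderiv_nonneg {E : Type*} [NormedAddCommGroup E] [NormedSpace ℝ E]
    {V : E → E →L[ℝ] ℝ} (hV : Differentiable ℝ V) (hpos : ∀ z v, 0 ≤ fderiv ℝ V z v v) (a b : E) :
    0 ≤ (V b - V a) (b - a) := by
  have hline : ∀ τ : ℝ, HasDerivAt (fun τ : ℝ => a + τ • (b - a)) (b - a) τ := fun τ => by
    simpa using ((hasDerivAt_id τ).smul_const (b - a)).const_add a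
  have hderiv : ∀ τ : ℝ, HasDerivAt (fun τ : ℝ => V (a + τ • (b - a)) (b - a))
      (fderiv ℝ V (a + τ • (b - a)) (b - a) (b - a)) τ := fun τ => by
    simpa using! ((hV _).hasFDerivAt.comp_hasDerivAt τ (hline τ)).clm_apply
      (hasDerivAt_const τ (b - a))
  have hmono : Monotone fun τ : ℝ => V (a + τ • (b - a)) (b - a) :=
    monotone_of_hasDerivAt_nonneg hderiv fun τ => hpos _ _
  simpa using hmono zero_le_one

section PartialDerivatives

/-- The linear form `a dx + b dy` on `ℝ²`; a differential is written in this form to read off its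
partial derivatives. -/
noncomputable def covector (a b : ℝ) : ℝ × ℝ →L[ℝ] ℝ :=
  a • ContinuousLinearMap.fst ℝ ℝ ℝ + b • ContinuousLinearMap.snd ℝ ℝ ℝ

theorem covector_apply (a b : ℝ) (v : ℝ × ℝ) : covector a b v = a * v.1 + b * v.2 := by
  simp [covector]

/-- The gradient `(u_x, u_y)` of a function on `ℝ²`, as a map of the plane to itself. -/
noncomputable def planeGradient (u : ℝ × ℝ → ℝ) (z : ℝ × ℝ) : ℝ × ℝ := (pdx u z, pdy u z)

variable {u : ℝ × ℝ → ℝ}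

theorem fderiv_eq_covector (u : ℝ × ℝ → ℝ) (z : ℝ × ℝ) :
    fderiv ℝ u z = covector (pdx u z) (pdy u z) := by
  ext <;> simp [covector_apply, pdx, pdy]

theorem pdx_eq_of_hasFDerivAt {z : ℝ × ℝ} {a b : ℝ} (h : HasFDerivAt u (covector a b) z) :
    pdx u z = a := by
  simp [pdx, h.fderiv, covector_apply]

theorem pdy_eq_of_hasFDerivAt {z : ℝ × ℝ} {a b : ℝ} (h : HasFDerivAt u (covector a b) z) :
    pdy u z = b := by
  simp [pdy, h.fderiv, covector_apply]

theorem pdx_neg (u : ℝ × ℝ → ℝ) : pdx (-u) = -pdx u := by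
  ext z
  simp [pdx, fderiv_neg]

theorem pdy_neg (u : ℝ × ℝ → ℝ) : pdy (-u) = -pdy u := by
  ext z
  simp [pdy, fderiv_neg]

theorem contDiff_pdx {n : WithTop ℕ∞} (hu : ContDiff ℝ (n + 1) u) : ContDiff ℝ n (pdx u) :=
  (hu.fderiv_right le_rfl).clm_apply contDiff_const

theorem contDiff_pdy {n : WithTop ℕ∞} (hu : ContDiff ℝ (n + 1) u) : ContDiff ℝ n (pdy u) :=
  (hu.fderiv_right le_rfl).clm_apply contDiff_const

theorem contDiff_planeGradient {n : WithTop ℕ∞} (hu : ContDiff ℝ (n + 1) u) :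
    ContDiff ℝ n (planeGradient u) :=
  (contDiff_pdx hu).prodMk (contDiff_pdy hu)

theorem contDiff_covector {n : WithTop ℕ∞} {A B : ℝ × ℝ → ℝ} (hA : ContDiff ℝ n A)
    (hB : ContDiff ℝ n B) : ContDiff ℝ n fun z => covector (A z) (B z) := by
  unfold covector
  fun_prop

theorem fderiv_covector_apply {A B : ℝ × ℝ → ℝ} {z : ℝ × ℝ} (hA : DifferentiableAt ℝ A z)
    (hB : DifferentiableAt ℝ B z) (v : ℝ × ℝ) :
    fderiv ℝ (fun z => covector (A z) (B z)) z v = covector (fderiv ℝ A z v) (fderiv ℝ B z v) := by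
  have h : HasFDerivAt (fun z => covector (A z) (B z))
      ((fderiv ℝ A z).smulRight (ContinuousLinearMap.fst ℝ ℝ ℝ) +
        (fderiv ℝ B z).smulRight (ContinuousLinearMap.snd ℝ ℝ ℝ)) z :=
    (hA.hasFDerivAt.smul_const (ContinuousLinearMap.fst ℝ ℝ ℝ)).add
      (hB.hasFDerivAt.smul_const (ContinuousLinearMap.snd ℝ ℝ ℝ))
  rw [h.fderiv]
  rfl

theorem pdx_pdy_eq_pdy_pdx (hu : ContDiff ℝ 2 u) : pdx (pdy u) = pdy (pdx u) := by
  ext z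
  have hsymm := hu.contDiffAt (x := z).isSymmSndFDerivAt (by simp)
  have hdiff : DifferentiableAt ℝ (fderiv ℝ u) z :=
    (hu.fderiv_right one_add_one_eq_two.le).differentiable one_ne_zero z
  have hswap : ∀ v w, fderiv ℝ (fun y => fderiv ℝ u y v) z w = fderiv ℝ (fderiv ℝ u) z w v :=
    fun v w => by simp [fderiv_clm_apply hdiff (differentiableAt_const v)]
  calc pdx (pdy u) z = fderiv ℝ (fderiv ℝ u) z (1, 0) (0, 1) := hswap _ _
    _ = fderiv ℝ (fderiv ℝ u) z (0, 1) (1, 0) := hsymm _ _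
    _ = pdy (pdx u) z := (hswap _ _).symm

theorem exists_pdx_eq_and_pdy_eq {n : ℕ} (hn : n ≠ 0) {A B : ℝ × ℝ → ℝ}
    (hA : ContDiff ℝ n A) (hB : ContDiff ℝ n B) (hAB : pdy A = pdx B) :
    ∃ u : ℝ × ℝ → ℝ, ContDiff ℝ (n + 1) u ∧ pdx u = A ∧ pdy u = B := by
  have hn' : (n : WithTop ℕ∞) ≠ 0 := by exact_mod_cast hn
  have hω : ContDiff ℝ n fun z => covector (A z) (B z) := contDiff_covector hA hB
  have hclosed : ∀ z v w, fderiv ℝ (fun z => covector (A z) (B z)) z v w =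
      fderiv ℝ (fun z => covector (A z) (B z)) z w v := fun z v w => by
    rw [fderiv_covector_apply (hA.differentiable hn' z) (hB.differentiable hn' z),
      fderiv_covector_apply (hA.differentiable hn' z) (hB.differentiable hn' z)]
    simp only [fderiv_eq_covector, covector_apply, hAB]
    ring
  obtain ⟨u, hu⟩ := convex_univ.exists_forall_hasFDerivAt_of_fderiv_symmetric isOpen_univ
    (hω.differentiable hn').differentiableOn fun z _ => hclosed z
  have hu : ∀ z, HasFDerivAt u (covector (A z) (B z)) z := fun z => hu z trivial
  exact ⟨u, contDiff_succ_iff_hasFDerivAt.2 ⟨_, hω, hu⟩,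
    funext fun z => pdx_eq_of_hasFDerivAt (hu z), funext fun z => pdy_eq_of_hasFDerivAt (hu z)⟩

theorem apply_eq_of_pdx_eq_const_of_pdy_eq_const {a b : ℝ} (hu : Differentiable ℝ u)
    (hx : ∀ z, pdx u z = a) (hy : ∀ z, pdy u z = b) (x y : ℝ) :
    u (x, y) = a * x + b * y + u 0 := by
  have hfderiv : ∀ z, fderiv ℝ u z = fderiv ℝ (fun z => covector a b z + u 0) z := fun z => by
    rw [fderiv_eq_covector, hx, hy, fderiv_add_const, ContinuousLinearMap.fderiv]
  have hu_eq := eq_of_fderiv_eq hu ((covector a b).differentiable.add_const _) hfderiv 0 (by simp)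
  simpa [covector_apply] using congrFun hu_eq (x, y)

end PartialDerivatives

section Jorgens

theorem quadraticForm_nonneg {r s t : ℝ} (hr : 0 < r) (hdet : 0 ≤ r * t - s ^ 2) (x y : ℝ) :
    0 ≤ r * x ^ 2 + 2 * s * x * y + t * y ^ 2 := by
  have hsq : r * (r * x ^ 2 + 2 * s * x * y + t * y ^ 2) =
      (r * x + s * y) ^ 2 + (r * t - s ^ 2) * y ^ 2 := by ring
  exact nonneg_of_mul_nonneg_right (hsq ▸ by positivity) hr

/-- The complex dilatation of Lewy's map: for `H = (r s; s t)` of determinant `1`, the number `c`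
with `conj ((1 - H) v) = c * (1 + H) v` for all vectors `v`. -/
noncomputable def lewyCoeff (r s t : ℝ) : ℂ := ⟨(t - r) / (2 + r + t), 2 * s / (2 + r + t)⟩

theorem lewyCoeff_mul {r s t : ℝ} (hdet : r * t - s ^ 2 = 1) (hne : 2 + r + t ≠ 0) (x y : ℝ) :
    lewyCoeff r s t * ⟨x + (r * x + s * y), y + (s * x + t * y)⟩ =
      ⟨x - (r * x + s * y), -(y - (s * x + t * y))⟩ := by
  apply Complex.ext <;> simp only [lewyCoeff, Complex.mul_re, Complex.mul_im] <;> field_simp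
  · linear_combination (2 * x) * hdet
  · linear_combination (-2 * y) * hdet

theorem normSq_lewyCoeff {r s t : ℝ} (hdet : r * t - s ^ 2 = 1) (hne : 2 + r + t ≠ 0) :
    Complex.normSq (lewyCoeff r s t) = 1 - 4 / (2 + r + t) := by
  rw [Complex.normSq_apply, lewyCoeff]
  field_simp
  linear_combination (-4) * hdet

theorem norm_lewyCoeff_le_one {r s t : ℝ} (hdet : r * t - s ^ 2 = 1) (hpos : 0 < 2 + r + t) :
    ‖lewyCoeff r s t‖ ≤ 1 := by
  rw [← sq_le_one_iff₀ (norm_nonneg _), ← Complex.normSq_eq_norm_sq,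
    normSq_lewyCoeff hdet hpos.ne', sub_le_self_iff]
  positivity

theorem eq_of_lewyCoeff_eq {r s t r' s' t' : ℝ} (hdet : r * t - s ^ 2 = 1) (hne : 2 + r + t ≠ 0)
    (hdet' : r' * t' - s' ^ 2 = 1) (hne' : 2 + r' + t' ≠ 0)
    (h : lewyCoeff r s t = lewyCoeff r' s' t') : r = r' ∧ s = s' ∧ t = t' := by
  have htrace : 2 + r + t = 2 + r' + t' := by
    have hnorm := congrArg Complex.normSq h
    rw [normSq_lewyCoeff hdet hne, normSq_lewyCoeff hdet' hne'] at hnorm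
    field_simp at hnorm
    linarith
  have hre := congrArg Complex.re h
  have him := congrArg Complex.im h
  simp only [lewyCoeff, htrace, div_left_inj' hne'] at hre him
  exact ⟨by linarith, by linarith, by linarith⟩

/-- Lewy's map `z ↦ z + ∇φ(z)`, with the plane it takes values in identified with `ℂ`. -/
noncomputable def lewyMap (φ : ℝ × ℝ → ℝ) (z : ℝ × ℝ) : ℂ :=
  ⟨z.1 + pdx φ z, z.2 + pdy φ z⟩

/-- The complex conjugate of `z - ∇φ(z)`, which is holomorphic in the coordinate `lewyMap φ`. -/
noncomputable def lewyConjMap (φ : ℝ × ℝ → ℝ) (z : ℝ × ℝ) : ℂ :=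
  ⟨z.1 - pdx φ z, -(z.2 - pdy φ z)⟩

variable {φ : ℝ × ℝ → ℝ}

theorem contDiff_complex_mk {E : Type*} [NormedAddCommGroup E] [NormedSpace ℝ E]
    {n : WithTop ℕ∞} {f g : E → ℝ} (hf : ContDiff ℝ n f) (hg : ContDiff ℝ n g) :
    ContDiff ℝ n fun z => (⟨f z, g z⟩ : ℂ) :=
  Complex.equivRealProdCLM.symm.contDiff.comp (hf.prodMk hg)

theorem fderiv_complex_mk_apply {E : Type*} [NormedAddCommGroup E] [NormedSpace ℝ E]
    {f g : E → ℝ} {z : E} (hf : DifferentiableAt ℝ f z) (hg : DifferentiableAt ℝ g z) (v : E) :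
    fderiv ℝ (fun z => (⟨f z, g z⟩ : ℂ)) z v = ⟨fderiv ℝ f z v, fderiv ℝ g z v⟩ := by
  have h := Complex.equivRealProdCLM.symm.hasFDerivAt.comp z (hf.hasFDerivAt.prodMk hg.hasFDerivAt)
  exact congrArg (· v) h.fderiv

theorem contDiff_lewyMap {n : WithTop ℕ∞} (hφ : ContDiff ℝ (n + 1) φ) :
    ContDiff ℝ n (lewyMap φ) :=
  contDiff_complex_mk (contDiff_fst.add (contDiff_pdx hφ)) (contDiff_snd.add (contDiff_pdy hφ))

theorem contDiff_lewyConjMap {n : WithTop ℕ∞} (hφ : ContDiff ℝ (n + 1) φ) :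
    ContDiff ℝ n (lewyConjMap φ) :=
  contDiff_complex_mk (contDiff_fst.sub (contDiff_pdx hφ))
    (contDiff_snd.sub (contDiff_pdy hφ)).neg

theorem fderiv_lewyConjMap (hφ : ContDiff ℝ 2 φ) {z : ℝ × ℝ}
    (hdet : pdx (pdx φ) z * pdy (pdy φ) z - pdy (pdx φ) z ^ 2 = 1)
    (hne : 2 + pdx (pdx φ) z + pdy (pdy φ) z ≠ 0) :
    fderiv ℝ (lewyConjMap φ) z =
      lewyCoeff (pdx (pdx φ) z) (pdy (pdx φ) z) (pdy (pdy φ) z) • fderiv ℝ (lewyMap φ) z := by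
  have hx : DifferentiableAt ℝ (pdx φ) z := (contDiff_pdx hφ).differentiable one_ne_zero z
  have hy : DifferentiableAt ℝ (pdy φ) z := (contDiff_pdy hφ).differentiable one_ne_zero z
  have hT : ∀ v, fderiv ℝ (lewyMap φ) z v =
      ⟨v.1 + fderiv ℝ (pdx φ) z v, v.2 + fderiv ℝ (pdy φ) z v⟩ := fun v => by
    unfold lewyMap
    rw [fderiv_complex_mk_apply (by fun_prop) (by fun_prop), fderiv_fun_add (by fun_prop) hx,
      fderiv_fun_add (by fun_prop) hy, fderiv_fst, fderiv_snd]
    rfl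
  have hS : ∀ v, fderiv ℝ (lewyConjMap φ) z v =
      ⟨v.1 - fderiv ℝ (pdx φ) z v, -(v.2 - fderiv ℝ (pdy φ) z v)⟩ := fun v => by
    unfold lewyConjMap
    rw [fderiv_complex_mk_apply (by fun_prop) (by fun_prop), fderiv_fun_sub (by fun_prop) hx,
      fderiv_fun_neg, fderiv_fun_sub (by fun_prop) hy, fderiv_fst, fderiv_snd]
    rfl
  refine ContinuousLinearMap.ext fun v => ?_
  rw [_root_.smul_apply, smul_eq_mul, hT, hS]
  simp only [fderiv_eq_covector, covector_apply, pdx_pdy_eq_pdy_pdx hφ]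
  exact (lewyCoeff_mul hdet hne v.1 v.2).symm

theorem planeGradient_sub_mul_sub_nonneg (hφ : ContDiff ℝ 2 φ) (hpos : ∀ z, 0 < pdx (pdx φ) z)
    (hdet : ∀ z, 0 ≤ pdx (pdx φ) z * pdy (pdy φ) z - pdy (pdx φ) z ^ 2) (a b : ℝ × ℝ) :
    0 ≤ (pdx φ b - pdx φ a) * (b.1 - a.1) + (pdy φ b - pdy φ a) * (b.2 - a.2) := by
  have hφ' : ContDiff ℝ 1 (fderiv ℝ φ) := hφ.fderiv_right one_add_one_eq_two.le
  have hx : Differentiable ℝ (pdx φ) := (contDiff_pdx hφ).differentiable one_ne_zero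
  have hy : Differentiable ℝ (pdy φ) := (contDiff_pdy hφ).differentiable one_ne_zero
  have hhess : ∀ z v, 0 ≤ fderiv ℝ (fderiv ℝ φ) z v v := fun z v => by
    rw [funext (fderiv_eq_covector φ), fderiv_covector_apply (hx z) (hy z)]
    simp only [fderiv_eq_covector, covector_apply, pdx_pdy_eq_pdy_pdx hφ]
    linarith [quadraticForm_nonneg (hpos z) (hdet z) v.1 v.2]
  have hmono := apply_sub_apply_nonneg_of_fderiv_nonneg (hφ'.differentiable one_ne_zero) hhess a b
  simp only [fderiv_eq_covector, _root_.sub_apply, covector_apply, Prod.fst_sub,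
    Prod.snd_sub] at hmono
  linarith

theorem antilipschitzWith_lewyMap (hmono : ∀ a b : ℝ × ℝ,
      0 ≤ (pdx φ b - pdx φ a) * (b.1 - a.1) + (pdy φ b - pdy φ a) * (b.2 - a.2)) :
    AntilipschitzWith 1 (lewyMap φ) := by
  refine AntilipschitzWith.of_le_mul_dist fun a b => ?_
  have hab := hmono b a
  have hnorm : ‖lewyMap φ a - lewyMap φ b‖ = √((a.1 - b.1 + (pdx φ a - pdx φ b)) ^ 2 +
      (a.2 - b.2 + (pdy φ a - pdy φ b)) ^ 2) := by
    rw [Complex.norm_eq_sqrt_sq_add_sq]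
    simp only [lewyMap, Complex.sub_re, Complex.sub_im]
    ring_nf
  rw [NNReal.coe_one, one_mul, dist_eq_norm (lewyMap φ a), hnorm, Prod.dist_eq, Real.dist_eq,
    Real.dist_eq]
  refine max_le (Real.abs_le_sqrt ?_) (Real.abs_le_sqrt ?_)
  · nlinarith [sq_nonneg (pdx φ a - pdx φ b), sq_nonneg (pdy φ a - pdy φ b),
      sq_nonneg (a.2 - b.2)]
  · nlinarith [sq_nonneg (pdx φ a - pdx φ b), sq_nonneg (pdy φ a - pdy φ b),
      sq_nonneg (a.1 - b.1)]

theorem jorgens_theorem_of_pos (hφ : ContDiff ℝ 2 φ)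
    (hdet : ∀ z, pdx (pdx φ) z * pdy (pdy φ) z - pdy (pdx φ) z ^ 2 = 1)
    (hpos : ∀ z, 0 < pdx (pdx φ) z) (z w : ℝ × ℝ) :
    pdx (pdx φ) z = pdx (pdx φ) w ∧ pdy (pdx φ) z = pdy (pdx φ) w ∧
      pdy (pdy φ) z = pdy (pdy φ) w := by
  have htr : ∀ z, 0 < 2 + pdx (pdx φ) z + pdy (pdy φ) z := fun z => by
    have hprod : 0 < pdx (pdx φ) z * pdy (pdy φ) z := by
      linarith [hdet z, sq_nonneg (pdy (pdx φ) z)]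
    linarith [hpos z, pos_of_mul_pos_right hprod (hpos z).le]
  have hanti : AntilipschitzWith 1 (lewyMap φ) := antilipschitzWith_lewyMap
    (planeGradient_sub_mul_sub_nonneg hφ hpos fun z => (hdet z).symm ▸ zero_le_one)
  have hbdd : Bornology.IsBounded (range fun z =>
      lewyCoeff (pdx (pdx φ) z) (pdy (pdx φ) z) (pdy (pdy φ) z)) :=
    isBounded_iff_forall_norm_le.2
      ⟨1, forall_mem_range.2 fun z => norm_lewyCoeff_le_one (hdet z) (htr z)⟩
  have hcoeff := apply_eq_apply_of_fderiv_eq_smul_fderiv (by simp) (contDiff_lewyMap hφ) hanti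
    ((contDiff_lewyConjMap hφ).differentiable one_ne_zero)
    (fun z => fderiv_lewyConjMap hφ (hdet z) (htr z).ne') hbdd z w
  exact eq_of_lewyCoeff_eq (hdet z) (htr z).ne' (hdet w) (htr w).ne' hcoeff

theorem jorgens_theorem (hφ : ContDiff ℝ 2 φ)
    (hdet : ∀ z, pdx (pdx φ) z * pdy (pdy φ) z - pdy (pdx φ) z ^ 2 = 1) (z w : ℝ × ℝ) :
    pdx (pdx φ) z = pdx (pdx φ) w ∧ pdy (pdx φ) z = pdy (pdx φ) w ∧
      pdy (pdy φ) z = pdy (pdy φ) w := by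
  have hne : 0 ∉ range (pdx (pdx φ)) := by
    rintro ⟨z, hz⟩
    have hdetz := hdet z
    rw [hz] at hdetz
    linarith [sq_nonneg (pdy (pdx φ) z)]
  have hcont : Continuous (pdx (pdx φ)) := (contDiff_pdx (n := 0) (contDiff_pdx hφ)).continuous
  by_cases hpos : ∀ z, 0 < pdx (pdx φ) z
  · exact jorgens_theorem_of_pos hφ hdet hpos z w
  · push Not at hpos
    have hneg : ∀ z, pdx (pdx φ) z < 0 := fun z => by
      by_contra! hz
      exact hne (mem_range_of_exists_le_of_exists_ge hcont hpos ⟨z, hz⟩)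
    simpa [pdx_neg, pdy_neg] using jorgens_theorem_of_pos (φ := -φ) hφ.neg
      (by simpa [pdx_neg, pdy_neg] using hdet) (by simpa [pdx_neg] using hneg) z w

end Jorgens

section MinimalSurface

/-- The minimal surface equation for `u` on the whole plane. -/
def IsMinimalGraph (u : ℝ × ℝ → ℝ) : Prop :=
  ∀ p : ℝ × ℝ, (1 + pdy u p ^ 2) * pdx (pdx u) p - 2 * pdx u p * pdy u p * pdy (pdx u) p
    + (1 + pdx u p ^ 2) * pdy (pdy u) p = 0

/-- The area density `√(1 + p² + q²)` of a graph, as a function of its gradient `P = (p, q)`. -/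
noncomputable def areaDensity (P : ℝ × ℝ) : ℝ := √(1 + P.1 ^ 2 + P.2 ^ 2)

theorem areaDensity_sq (P : ℝ × ℝ) : areaDensity P ^ 2 = 1 + P.1 ^ 2 + P.2 ^ 2 :=
  Real.sq_sqrt (by positivity)

theorem areaDensity_pos (P : ℝ × ℝ) : 0 < areaDensity P := Real.sqrt_pos.2 (by positivity)

theorem one_le_areaDensity (P : ℝ × ℝ) : 1 ≤ areaDensity P :=
  Real.one_le_sqrt.2 (by linarith [sq_nonneg P.1, sq_nonneg P.2])

theorem contDiff_areaDensity {n : WithTop ℕ∞} : ContDiff ℝ n areaDensity :=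
  ContDiff.sqrt (by fun_prop) fun P => by positivity

theorem fderiv_areaDensity_apply (P v : ℝ × ℝ) :
    fderiv ℝ areaDensity P v = (P.1 * v.1 + P.2 * v.2) / areaDensity P := by
  have hpos := areaDensity_pos P
  have hsq : fderiv ℝ (fun P => areaDensity P ^ 2) P v = 2 * P.1 * v.1 + 2 * P.2 * v.2 := by
    simp_rw [areaDensity_sq, add_assoc]
    rw [fderiv_const_add, fderiv_fun_add (by fun_prop) (by fun_prop),
      fderiv_fun_pow _ (by fun_prop), fderiv_fun_pow _ (by fun_prop), fderiv_fst, fderiv_snd]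
    simp
  have hW : DifferentiableAt ℝ areaDensity P := contDiff_areaDensity.differentiable one_ne_zero P
  rw [fderiv_fun_pow _ hW] at hsq
  simp only [Nat.add_one_sub_one, pow_one, nsmul_eq_mul, Nat.cast_ofNat, _root_.smul_apply,
    smul_eq_mul] at hsq
  rw [eq_div_iff hpos.ne']
  linarith

theorem fderiv_div_areaDensity_apply {f : ℝ × ℝ → ℝ} {P : ℝ × ℝ} (hf : DifferentiableAt ℝ f P)
    (v : ℝ × ℝ) : fderiv ℝ (fun P => f P / areaDensity P) P v =
      (fderiv ℝ f P v * (1 + P.1 ^ 2 + P.2 ^ 2) - f P * (P.1 * v.1 + P.2 * v.2)) /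
        areaDensity P ^ 3 := by
  have hpos := areaDensity_pos P
  have hW : DifferentiableAt ℝ areaDensity P := contDiff_areaDensity.differentiable one_ne_zero P
  have hquot : DifferentiableAt ℝ (fun P => f P / areaDensity P) P := by
    simpa only [div_eq_mul_inv] using hf.fun_mul (hW.fun_inv hpos.ne')
  have hmul : f = fun P => f P / areaDensity P * areaDensity P :=
    funext fun Q => (div_mul_cancel₀ _ (areaDensity_pos Q).ne').symm
  have hprod : fderiv ℝ f P v = f P / areaDensity P * fderiv ℝ areaDensity P v +
      areaDensity P * fderiv ℝ (fun P => f P / areaDensity P) P v := by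
    conv_lhs => rw [hmul, fderiv_fun_mul hquot hW]
    rfl
  rw [fderiv_areaDensity_apply] at hprod
  rw [hprod, ← areaDensity_sq]
  field_simp
  ring

/-- The coefficient `E` of the first fundamental form of a graph with gradient `P`, divided by the
area density so that `E`, `F`, `G` form a matrix of determinant `1`. -/
noncomputable def normalizedE (P : ℝ × ℝ) : ℝ := (1 + P.1 ^ 2) / areaDensity P

/-- The coefficient `F` of the first fundamental form, normalized as in `normalizedE`. -/
noncomputable def normalizedF (P : ℝ × ℝ) : ℝ := P.1 * P.2 / areaDensity P

/-- The coefficient `G` of the first fundamental form, normalized as in `normalizedE`. -/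
noncomputable def normalizedG (P : ℝ × ℝ) : ℝ := (1 + P.2 ^ 2) / areaDensity P

theorem normalizedE_mul_normalizedG_sub_sq (P : ℝ × ℝ) :
    normalizedE P * normalizedG P - normalizedF P ^ 2 = 1 := by
  have hpos := areaDensity_pos P
  unfold normalizedE normalizedF normalizedG
  field_simp
  rw [areaDensity_sq]
  ring

theorem contDiff_normalizedE {n : WithTop ℕ∞} : ContDiff ℝ n normalizedE :=
  ContDiff.div (by fun_prop) contDiff_areaDensity fun P => (areaDensity_pos P).ne'

theorem contDiff_normalizedF {n : WithTop ℕ∞} : ContDiff ℝ n normalizedF :=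
  ContDiff.div (by fun_prop) contDiff_areaDensity fun P => (areaDensity_pos P).ne'

theorem contDiff_normalizedG {n : WithTop ℕ∞} : ContDiff ℝ n normalizedG :=
  ContDiff.div (by fun_prop) contDiff_areaDensity fun P => (areaDensity_pos P).ne'

theorem fderiv_normalizedE_apply (P v : ℝ × ℝ) : fderiv ℝ normalizedE P v =
    (P.1 * (1 + P.1 ^ 2 + 2 * P.2 ^ 2) * v.1 - P.2 * (1 + P.1 ^ 2) * v.2) / areaDensity P ^ 3 := by
  unfold normalizedE
  rw [fderiv_div_areaDensity_apply (by fun_prop), fderiv_const_add,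
    fderiv_fun_pow _ (by fun_prop), fderiv_fst]
  congr 1
  simp only [Nat.add_one_sub_one, pow_one, nsmul_eq_mul, Nat.cast_ofNat, _root_.smul_apply,
    ContinuousLinearMap.coe_fst', smul_eq_mul]
  ring

theorem fderiv_normalizedF_apply (P v : ℝ × ℝ) : fderiv ℝ normalizedF P v =
    (P.2 * (1 + P.2 ^ 2) * v.1 + P.1 * (1 + P.1 ^ 2) * v.2) / areaDensity P ^ 3 := by
  unfold normalizedF
  rw [fderiv_div_areaDensity_apply (by fun_prop), fderiv_fun_mul (by fun_prop) (by fun_prop),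
    fderiv_fst, fderiv_snd]
  congr 1
  simp only [_root_.add_apply, _root_.smul_apply, ContinuousLinearMap.coe_fst',
    ContinuousLinearMap.coe_snd', smul_eq_mul]
  ring

theorem fderiv_normalizedG_apply (P v : ℝ × ℝ) : fderiv ℝ normalizedG P v =
    (P.2 * (1 + 2 * P.1 ^ 2 + P.2 ^ 2) * v.2 - P.1 * (1 + P.2 ^ 2) * v.1) / areaDensity P ^ 3 := by
  unfold normalizedG
  rw [fderiv_div_areaDensity_apply (by fun_prop), fderiv_const_add,
    fderiv_fun_pow _ (by fun_prop), fderiv_snd]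
  congr 1
  simp only [Nat.add_one_sub_one, pow_one, nsmul_eq_mul, Nat.cast_ofNat, _root_.smul_apply,
    ContinuousLinearMap.coe_snd', smul_eq_mul]
  ring

theorem sq_eq_sq_of_normalizedE_eq_of_normalizedG_eq {P Q : ℝ × ℝ}
    (hE : normalizedE P = normalizedE Q) (hG : normalizedG P = normalizedG Q) :
    P.1 ^ 2 = Q.1 ^ 2 ∧ P.2 ^ 2 = Q.2 ^ 2 := by
  have htrace : ∀ R,
      normalizedE R + normalizedG R = areaDensity R + (areaDensity R)⁻¹ := fun R => by
    have hpos := areaDensity_pos R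
    unfold normalizedE normalizedG
    field_simp
    linarith [areaDensity_sq R]
  have hW : areaDensity P = areaDensity Q := by
    have hPpos := areaDensity_pos P
    have hQpos := areaDensity_pos Q
    have hsum : areaDensity P + (areaDensity P)⁻¹ = areaDensity Q + (areaDensity Q)⁻¹ := by
      rw [← htrace, ← htrace, hE, hG]
    have hfactor : (areaDensity P - areaDensity Q) * (areaDensity P * areaDensity Q - 1) = 0 := by
      field_simp at hsum
      linear_combination hsum
    rcases mul_eq_zero.1 hfactor with h | h
    · exact sub_eq_zero.1 h
    · nlinarith [one_le_areaDensity P, one_le_areaDensity Q]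
  have hne := (areaDensity_pos Q).ne'
  rw [normalizedE, normalizedE, hW, div_left_inj' hne] at hE
  rw [normalizedG, normalizedG, hW, div_left_inj' hne] at hG
  exact ⟨by linarith, by linarith⟩

theorem eq_of_continuous_of_sq_eq_sq {X 𝕜 : Type*} [TopologicalSpace X] [PreconnectedSpace X]
    [Field 𝕜] [TopologicalSpace 𝕜] [T1Space 𝕜] [ContinuousInv₀ 𝕜] [ContinuousMul 𝕜] {f : X → 𝕜}
    (hf : Continuous f) (hsq : ∀ x y, f x ^ 2 = f y ^ 2) (x y : X) : f x = f y := by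
  by_cases hy : f y = 0
  · simpa [hy] using hsq x y
  · exact isPreconnected_univ.eq_of_sq_eq hf.continuousOn (continuousOn_const (c := f y))
      (fun z _ => hsq z y) (fun _ => hy) (mem_univ y) rfl (mem_univ x)

variable {u : ℝ × ℝ → ℝ}

theorem fderiv_comp_planeGradient_apply {f : ℝ × ℝ → ℝ} {z : ℝ × ℝ}
    (hf : DifferentiableAt ℝ f (planeGradient u z)) (hu : ContDiff ℝ 2 u) (v : ℝ × ℝ) :
    fderiv ℝ (f ∘ planeGradient u) z v =
      fderiv ℝ f (planeGradient u z) (fderiv ℝ (pdx u) z v, fderiv ℝ (pdy u) z v) := by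
  have hx : DifferentiableAt ℝ (pdx u) z := (contDiff_pdx hu).differentiable one_ne_zero z
  have hy : DifferentiableAt ℝ (pdy u) z := (contDiff_pdy hu).differentiable one_ne_zero z
  exact congrArg (· v) (hf.hasFDerivAt.comp z (hx.hasFDerivAt.prodMk hy.hasFDerivAt)).fderiv

theorem pdx_comp_planeGradient {f : ℝ × ℝ → ℝ} {z : ℝ × ℝ}
    (hf : DifferentiableAt ℝ f (planeGradient u z)) (hu : ContDiff ℝ 2 u) :
    pdx (f ∘ planeGradient u) z =
      fderiv ℝ f (planeGradient u z) (pdx (pdx u) z, pdx (pdy u) z) :=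
  fderiv_comp_planeGradient_apply hf hu _

theorem pdy_comp_planeGradient {f : ℝ × ℝ → ℝ} {z : ℝ × ℝ}
    (hf : DifferentiableAt ℝ f (planeGradient u z)) (hu : ContDiff ℝ 2 u) :
    pdy (f ∘ planeGradient u) z =
      fderiv ℝ f (planeGradient u z) (pdy (pdx u) z, pdy (pdy u) z) :=
  fderiv_comp_planeGradient_apply hf hu _

theorem pdy_normalizedE_comp_planeGradient (hu : ContDiff ℝ 2 u) (hmin : IsMinimalGraph u) :
    pdy (normalizedE ∘ planeGradient u) = pdx (normalizedF ∘ planeGradient u) := by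
  ext z
  rw [pdy_comp_planeGradient (contDiff_normalizedE.differentiable one_ne_zero _) hu,
    pdx_comp_planeGradient (contDiff_normalizedF.differentiable one_ne_zero _) hu,
    fderiv_normalizedE_apply, fderiv_normalizedF_apply, pdx_pdy_eq_pdy_pdx hu]
  congr 1
  simp only [planeGradient]
  linear_combination (-pdy u z) * hmin z

theorem pdy_normalizedF_comp_planeGradient (hu : ContDiff ℝ 2 u) (hmin : IsMinimalGraph u) :
    pdy (normalizedF ∘ planeGradient u) = pdx (normalizedG ∘ planeGradient u) := by
  ext z
  rw [pdy_comp_planeGradient (contDiff_normalizedF.differentiable one_ne_zero _) hu,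
    pdx_comp_planeGradient (contDiff_normalizedG.differentiable one_ne_zero _) hu,
    fderiv_normalizedF_apply, fderiv_normalizedG_apply, pdx_pdy_eq_pdy_pdx hu]
  congr 1
  simp only [planeGradient]
  linear_combination (pdx u z) * hmin z

theorem exists_hessian_eq_normalized (hu : ContDiff ℝ 2 u) (hmin : IsMinimalGraph u) :
    ∃ φ : ℝ × ℝ → ℝ, ContDiff ℝ 2 φ ∧ pdx (pdx φ) = normalizedE ∘ planeGradient u ∧
      pdy (pdx φ) = normalizedF ∘ planeGradient u ∧
      pdy (pdy φ) = normalizedG ∘ planeGradient u := by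
  have hgrad : ContDiff ℝ (1 : ℕ) (planeGradient u) := contDiff_planeGradient hu
  obtain ⟨A, hA, hAx, hAy⟩ := exists_pdx_eq_and_pdy_eq one_ne_zero (contDiff_normalizedE.comp hgrad)
    (contDiff_normalizedF.comp hgrad) (pdy_normalizedE_comp_planeGradient hu hmin)
  obtain ⟨B, hB, hBx, hBy⟩ := exists_pdx_eq_and_pdy_eq one_ne_zero (contDiff_normalizedF.comp hgrad)
    (contDiff_normalizedG.comp hgrad) (pdy_normalizedF_comp_planeGradient hu hmin)
  obtain ⟨φ, hφ, rfl, rfl⟩ := exists_pdx_eq_and_pdy_eq one_ne_zero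
    (hA.of_le le_self_add) (hB.of_le le_self_add) (hAy.trans hBx.symm)
  exact ⟨φ, hφ, hAx, hAy, hBy⟩

theorem planeGradient_eq_planeGradient (hu : ContDiff ℝ 2 u) (hmin : IsMinimalGraph u)
    (z w : ℝ × ℝ) : planeGradient u z = planeGradient u w := by
  obtain ⟨φ, hφ, hE, hF, hG⟩ := exists_hessian_eq_normalized hu hmin
  have hdet : ∀ z, pdx (pdx φ) z * pdy (pdy φ) z - pdy (pdx φ) z ^ 2 = 1 := fun z => by
    rw [hE, hF, hG]
    exact normalizedE_mul_normalizedG_sub_sq _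
  have hsq : ∀ z w, pdx u z ^ 2 = pdx u w ^ 2 ∧ pdy u z ^ 2 = pdy u w ^ 2 := fun z w => by
    obtain ⟨hEzw, -, hGzw⟩ := jorgens_theorem hφ hdet z w
    rw [hE] at hEzw
    rw [hG] at hGzw
    exact sq_eq_sq_of_normalizedE_eq_of_normalizedG_eq hEzw hGzw
  have hx : ContDiff ℝ 1 (pdx u) := contDiff_pdx hu
  have hy : ContDiff ℝ 1 (pdy u) := contDiff_pdy hu
  exact Prod.ext (eq_of_continuous_of_sq_eq_sq hx.continuous (fun z w => (hsq z w).1) z w)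
    (eq_of_continuous_of_sq_eq_sq hy.continuous (fun z w => (hsq z w).2) z w)

end MinimalSurface

/-- Bernstein's theorem: a `C²` solution of the minimal surface equation
`(1 + u_y²) u_xx − 2 u_x u_y u_xy + (1 + u_x²) u_yy = 0` on all of `ℝ²` is affine. -/
theorem bernstein_theorem
    (u : ℝ × ℝ → ℝ) (hu : ContDiff ℝ 2 u)
    (hmse : ∀ p : ℝ × ℝ,
      (1 + pdy u p ^ 2) * pdx (pdx u) p - 2 * pdx u p * pdy u p * pdy (pdx u) p
        + (1 + pdx u p ^ 2) * pdy (pdy u) p = 0) :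
    ∃ a b c : ℝ, ∀ x y : ℝ, u (x, y) = a * x + b * y + c := by
  have hgrad : ∀ z, planeGradient u z = planeGradient u 0 := fun z =>
    planeGradient_eq_planeGradient hu hmse z 0
  exact ⟨pdx u 0, pdy u 0, u 0, apply_eq_of_pdx_eq_const_of_pdy_eq_const
    (hu.differentiable two_ne_zero) (fun z => congrArg Prod.fst (hgrad z))
    fun z => congrArg Prod.snd (hgrad z)⟩
end

section
/- Let V : ℝ² → ℝ be a bounded continuous function which is 2π-periodic in its first variable, i.e. V(θ + 2π, t) = V(θ, t) for all (θ, t) ∈ ℝ². Then the real vector space of all bounded C² functions v : ℝ² → ℝ that are 2π-periodic in the first variable and satisfy Δv + V·v = 0 on ℝ² (where Δ = ∂²/∂θ² + ∂²/∂t² is the flat Laplacian) is finite dimensional. -/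
/-!
The `k`-th Fourier mode `y` in `θ` of a periodic `v` solves `y'' = k² y + f`, where `f` is the
`k`-th mode of `Δv`; for a solution of `Δv + V v = 0` it is bounded by `C sup_θ |v|`. Fix
`m = j + 1/2`, whose square lies in the gap between the eigenvalues `j²` and `(j + 1)²` of
`-d²/dθ²`, and measure everything against the weight `cosh (m t)`. A mode with `|k| > m` is
controlled by the maximum principle, since it grows more slowly than the weight; a mode with
`|k| < m` is controlled by comparison with the initial value problem, once its Cauchy data at
`t = 0` vanish. In both cases a weighted bound `A` on `f` gives the weighted bound
`A / |k² - m²|` on `y`. The sum over `k` of these factors tends to `0` as `j → ∞`, so for large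
`j` a solution whose modes with `|k| ≤ j` have zero Cauchy data improves its own weighted bound by
a factor less than `1`, and hence vanishes: finitely many Cauchy data determine a solution.
-/

/-- Flat Laplacian `∂²/∂θ² + ∂²/∂t²` on `ℝ²`. -/
noncomputable def lap2 (f : ℝ × ℝ → ℝ) (p : ℝ × ℝ) : ℝ :=
  fderiv ℝ (fun q => fderiv ℝ f q (1, 0)) p (1, 0)
    + fderiv ℝ (fun q => fderiv ℝ f q (0, 1)) p (0, 1)

open Filter Set Topology
open scoped Real

lemma deriv_deriv_nonpos_of_isLocalMax {f : ℝ → ℝ} {a : ℝ} (hmax : IsLocalMax f a)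
    (hf : ContinuousAt f a) : deriv (deriv f) a ≤ 0 := by
  by_contra! hpos
  have hmin : IsLocalMin f a := isLocalMin_of_deriv_deriv_pos hpos hmax.deriv_eq_zero hf
  have hconst : f =ᶠ[𝓝 a] fun _ ↦ f a := by
    filter_upwards [hmax, hmin] with t hle hge using le_antisymm hle hge
  have hzero : deriv (deriv f) a = 0 := by simpa using hconst.deriv.deriv_eq
  exact hpos.ne' hzero

lemma nonpos_of_eventually_nonpos_of_second_deriv_pos {z z' z'' : ℝ → ℝ}
    (hz : ∀ t, HasDerivAt z (z' t) t) (hz' : ∀ t, HasDerivAt z' (z'' t) t)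
    (hinf : ∀ᶠ t in cocompact ℝ, z t ≤ 0) (hpos : ∀ t, 0 < z t → 0 < z'' t) (t : ℝ) :
    z t ≤ 0 := by
  by_contra! ht
  have hcont : Continuous z := continuous_iff_continuousAt.2 fun s ↦ (hz s).continuousAt
  obtain ⟨s, hs⟩ := hcont.exists_forall_ge' t (hinf.mono fun _ h ↦ h.trans ht.le)
  have hsecond := deriv_deriv_nonpos_of_isLocalMax (Eventually.of_forall hs) hcont.continuousAt
  rw [funext fun r ↦ (hz r).deriv, (hz' s).deriv] at hsecond
  exact hsecond.not_gt (hpos s (ht.trans_le (hs t)))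

lemma nonneg_of_mul_le_deriv {z z' : ℝ → ℝ} {c : ℝ} (hz : ∀ t, HasDerivAt z (z' t) t)
    (hle : ∀ t, 0 ≤ t → c * z t ≤ z' t) (h0 : 0 ≤ z 0) {t : ℝ} (ht : 0 ≤ t) : 0 ≤ z t := by
  have hderiv (s : ℝ) : HasDerivAt (fun s ↦ Real.exp (-c * s) * z s)
      (Real.exp (-c * s) * (z' s - c * z s)) s :=
    ((((hasDerivAt_id s).const_mul (-c)).exp.mul (hz s))).congr_deriv (by simp; ring)
  have hmono : MonotoneOn (fun s ↦ Real.exp (-c * s) * z s) (Ici 0) := by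
    refine monotoneOn_of_deriv_nonneg (convex_Ici 0)
      (fun s _ ↦ (hderiv s).continuousAt.continuousWithinAt)
      (fun s _ ↦ (hderiv s).differentiableAt.differentiableWithinAt) fun s hs ↦ ?_
    rw [interior_Ici] at hs
    rw [(hderiv s).deriv]
    exact mul_nonneg (Real.exp_pos _).le (sub_nonneg.2 (hle s hs.le))
  have hexp : 0 ≤ Real.exp (-c * t) * z t := by
    refine h0.trans ?_
    simpa using hmono self_mem_Ici ht ht
  exact nonneg_of_mul_nonneg_right hexp (Real.exp_pos _)

/- `z'' - k² z = (D - |k|) (D + |k|) z`, so two first-order comparisons suffice. -/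
lemma nonneg_of_sq_mul_le_second_deriv {z z' z'' : ℝ → ℝ} {k : ℝ}
    (hz : ∀ t, HasDerivAt z (z' t) t) (hz' : ∀ t, HasDerivAt z' (z'' t) t)
    (hle : ∀ t, 0 ≤ t → k ^ 2 * z t ≤ z'' t) (h0 : 0 ≤ z 0) (h0' : 0 ≤ z' 0) {t : ℝ}
    (ht : 0 ≤ t) : 0 ≤ z t := by
  have hfactor (s : ℝ) (hs : 0 ≤ s) : 0 ≤ z' s + |k| * z s := by
    refine nonneg_of_mul_le_deriv (c := |k|) (fun s ↦ (hz' s).add ((hz s).const_mul |k|))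
      (fun s hs ↦ ?_) (add_nonneg h0' (mul_nonneg (abs_nonneg k) h0)) hs
    simp only [Pi.add_apply]
    linear_combination hle s hs + z s * sq_abs k
  exact nonneg_of_mul_le_deriv (c := -|k|) hz (fun s hs ↦ by linarith [hfactor s hs]) h0 ht

lemma nonneg_of_sq_mul_le_second_deriv_of_deriv_eq_zero {z z' z'' : ℝ → ℝ} {k : ℝ}
    (hz : ∀ t, HasDerivAt z (z' t) t) (hz' : ∀ t, HasDerivAt z' (z'' t) t)
    (hle : ∀ t, k ^ 2 * z t ≤ z'' t) (h0 : 0 ≤ z 0) (h0' : z' 0 = 0) (t : ℝ) : 0 ≤ z t := by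
  rcases le_total 0 t with ht | ht
  · exact nonneg_of_sq_mul_le_second_deriv hz hz' (fun s _ ↦ hle s) h0 h0'.ge ht
  have hreflect : 0 ≤ z (-(-t)) := by
    refine nonneg_of_sq_mul_le_second_deriv (z := fun s ↦ z (-s)) (z' := fun s ↦ -z' (-s))
      (z'' := fun s ↦ z'' (-s)) (k := k) (fun s ↦ ?_) (fun s ↦ ?_) (fun s _ ↦ hle (-s))
      (by simpa using h0) (by simp [h0']) (neg_nonneg.2 ht)
    · exact ((hz (-s)).comp s (hasDerivAt_neg s)).congr_deriv (by simp)
    · exact ((hz' (-s)).comp s (hasDerivAt_neg s)).neg.congr_deriv (by simp)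
  rwa [neg_neg] at hreflect

lemma hasDerivAt_cosh_mul (m t : ℝ) :
    HasDerivAt (fun t ↦ Real.cosh (m * t)) (m * Real.sinh (m * t)) t := by
  simpa [mul_comm] using ((hasDerivAt_id t).const_mul m).cosh

lemma hasDerivAt_sinh_mul (m t : ℝ) :
    HasDerivAt (fun t ↦ Real.sinh (m * t)) (m * Real.cosh (m * t)) t := by
  simpa [mul_comm] using ((hasDerivAt_id t).const_mul m).sinh

lemma exp_abs_le_two_mul_cosh (x : ℝ) : Real.exp |x| ≤ 2 * Real.cosh x := by
  linarith [Real.exp_abs_le x, Real.cosh_eq x]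

lemma exp_mul_abs_le_two_mul_cosh {α m : ℝ} (h : α ≤ m) (t : ℝ) :
    Real.exp (α * |t|) ≤ 2 * Real.cosh (m * t) := by
  refine le_trans ?_ (exp_abs_le_two_mul_cosh (m * t))
  rw [abs_mul]
  gcongr
  exact h.trans (le_abs_self m)

lemma isLittleO_exp_mul_abs_cosh_mul {α m : ℝ} (h : α < m) :
    (fun t ↦ Real.exp (α * |t|)) =o[cocompact ℝ] fun t ↦ Real.cosh (m * t) := by
  have hdecay : Tendsto (fun t ↦ Real.exp ((α - m) * |t|)) (cocompact ℝ) (𝓝 0) :=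
    Real.tendsto_exp_atBot.comp <|
      (tendsto_norm_cocompact_atTop (E := ℝ)).const_mul_atTop_of_neg (sub_neg.2 h)
  have hbig : (fun t ↦ Real.exp (m * |t|)) =O[cocompact ℝ] fun t ↦ Real.cosh (m * t) :=
    .of_bound 2 <| .of_forall fun t ↦ by
      rw [Real.norm_of_nonneg (Real.exp_pos _).le, Real.norm_of_nonneg (Real.cosh_pos _).le]
      exact exp_mul_abs_le_two_mul_cosh le_rfl t
  refine (((Asymptotics.isLittleO_one_iff ℝ).2 hdecay).mul_isBigO hbig).congr (fun t ↦ ?_)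
    fun t ↦ one_mul _
  rw [← Real.exp_add]
  ring_nf

lemma exists_dual_le_norm {E : Type*} [NormedAddCommGroup E] [NormedSpace ℝ E] (x : E) :
    ∃ g : StrongDual ℝ E, (∀ y, g y ≤ ‖y‖) ∧ g x = ‖x‖ := by
  obtain ⟨g, hg, hgx⟩ := exists_dual_vector'' ℝ x
  exact ⟨g, fun y ↦ (le_abs_self _).trans (by simpa using g.le_of_opNorm_le hg y), hgx⟩

section ForcedOscillator

variable {E : Type*} [NormedAddCommGroup E] [NormedSpace ℝ E] {y y' f : ℝ → E} {k m A : ℝ}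

lemma norm_le_div_mul_cosh_of_isLittleO (hkm : m ^ 2 < k ^ 2)
    (hy : ∀ t, HasDerivAt y (y' t) t) (hy' : ∀ t, HasDerivAt y' (k ^ 2 • y t + f t) t)
    (hf : ∀ t, ‖f t‖ ≤ A * Real.cosh (m * t))
    (hinf : y =o[cocompact ℝ] fun t ↦ Real.cosh (m * t)) (t : ℝ) :
    ‖y t‖ ≤ A / (k ^ 2 - m ^ 2) * Real.cosh (m * t) := by
  have hk : 0 < k ^ 2 - m ^ 2 := sub_pos.2 hkm
  have hA : 0 ≤ A := (norm_nonneg _).trans (by simpa using hf 0)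
  have hcosh (s : ℝ) : 0 < Real.cosh (m * s) := Real.cosh_pos _
  rw [← div_le_iff₀ (hcosh t)]
  refine le_of_forall_gt_imp_ge_of_dense fun B hB ↦ (div_le_iff₀ (hcosh t)).2 ?_
  have hBpos : 0 < B := (div_nonneg hA hk.le).trans_lt hB
  rw [div_lt_iff₀ hk] at hB
  obtain ⟨g, hgle, hgy⟩ := exists_dual_le_norm (y t)
  suffices g (y t) - B * Real.cosh (m * t) ≤ 0 by
    simpa [hgy] using this
  refine nonpos_of_eventually_nonpos_of_second_deriv_pos
    (fun s ↦ (g.hasFDerivAt.comp_hasDerivAt s (hy s)).sub ((hasDerivAt_cosh_mul m s).const_mul B))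
    (fun s ↦ (g.hasFDerivAt.comp_hasDerivAt s (hy' s)).sub
      (((hasDerivAt_sinh_mul m s).const_mul m).const_mul B)) ?_ (fun s hs ↦ ?_) t
  · filter_upwards [hinf.def hBpos] with s hs
    rw [Real.norm_of_nonneg (hcosh s).le] at hs
    exact sub_nonpos.2 ((hgle _).trans hs)
  · simp only [Pi.sub_apply, Function.comp_apply, map_add, map_smul, smul_eq_mul] at hs ⊢
    have hfs : -g (f s) ≤ B * (k ^ 2 - m ^ 2) * Real.cosh (m * s) := by
      rw [← map_neg]
      exact (hgle _).trans ((norm_neg (f s)).le.trans ((hf s).trans (by gcongr)))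
    have hsource : 0 < k ^ 2 * (g (y s) - B * Real.cosh (m * s)) :=
      mul_pos ((sq_nonneg m).trans_lt hkm) hs
    linear_combination hsource + hfs

lemma norm_le_div_mul_cosh_of_initial_eq_zero (hkm : k ^ 2 < m ^ 2)
    (hy : ∀ t, HasDerivAt y (y' t) t) (hy' : ∀ t, HasDerivAt y' (k ^ 2 • y t + f t) t)
    (hf : ∀ t, ‖f t‖ ≤ A * Real.cosh (m * t)) (h0 : y 0 = 0) (h0' : y' 0 = 0) (t : ℝ) :
    ‖y t‖ ≤ A / (m ^ 2 - k ^ 2) * Real.cosh (m * t) := by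
  have hm : 0 < m ^ 2 - k ^ 2 := sub_pos.2 hkm
  have hA : 0 ≤ A := (norm_nonneg _).trans (by simpa using hf 0)
  set B := A / (m ^ 2 - k ^ 2)
  have hBA : B * (m ^ 2 - k ^ 2) = A := div_mul_cancel₀ A hm.ne'
  obtain ⟨g, hgle, hgy⟩ := exists_dual_le_norm (y t)
  suffices 0 ≤ B * Real.cosh (m * t) - g (y t) by simpa [hgy] using this
  refine nonneg_of_sq_mul_le_second_deriv_of_deriv_eq_zero (k := k)
    (fun s ↦ ((hasDerivAt_cosh_mul m s).const_mul B).sub (g.hasFDerivAt.comp_hasDerivAt s (hy s)))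
    (fun s ↦ (((hasDerivAt_sinh_mul m s).const_mul m).const_mul B).sub
      (g.hasFDerivAt.comp_hasDerivAt s (hy' s))) (fun s ↦ ?_) ?_ ?_ t
  · have hfs : g (f s) ≤ A * Real.cosh (m * s) := (hgle _).trans (hf s)
    simp only [Pi.sub_apply, Function.comp_apply, map_add, map_smul, smul_eq_mul]
    rw [← hBA] at hfs
    linear_combination hfs
  · simpa [h0] using div_nonneg hA hm.le
  · simp [h0']

end ForcedOscillator

lemma one_div_abs_sq_sub_sq_le_of_nonneg {x μ : ℝ} (hx : 0 ≤ x) (hμ : 0 < μ) :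
    1 / |x ^ 2 - μ ^ 2| ≤ 1 / √μ * (1 / |x - μ| ^ (3 / 2 : ℝ)) := by
  rcases eq_or_ne x μ with rfl | hne
  · simp
  have hpos : 0 < |x - μ| := abs_pos.2 (sub_ne_zero.2 hne)
  have hle : |x - μ| ≤ x + μ := abs_le.2 ⟨by linarith, by linarith⟩
  have hsplit : |x - μ| ^ (3 / 2 : ℝ) = √|x - μ| * |x - μ| := by
    rw [Real.sqrt_eq_rpow, ← Real.rpow_add_one hpos.ne']
    norm_num
  rw [one_div_mul_one_div, hsplit, ← mul_assoc, sq_sub_sq, abs_mul, abs_of_pos (by linarith)]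
  gcongr
  calc √μ * √|x - μ| ≤ √(x + μ) * √(x + μ) := by gcongr; linarith
    _ = x + μ := Real.mul_self_sqrt (by linarith)

lemma one_div_abs_sq_sub_sq_le (x : ℝ) {μ : ℝ} (hμ : 0 < μ) :
    1 / |x ^ 2 - μ ^ 2| ≤
      1 / √μ * (1 / |x - μ| ^ (3 / 2 : ℝ) + 1 / |x + μ| ^ (3 / 2 : ℝ)) := by
  rw [mul_add]
  rcases le_total 0 x with hx | hx
  · exact (one_div_abs_sq_sub_sq_le_of_nonneg hx hμ).trans (le_add_of_nonneg_right (by positivity))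
  · have h := one_div_abs_sq_sub_sq_le_of_nonneg (neg_nonneg.2 hx) hμ
    rw [neg_sq, ← neg_add', abs_neg] at h
    exact h.trans (le_add_of_nonneg_left (by positivity))

lemma summable_one_div_abs_int_sq_sub_sq {μ : ℝ} (hμ : 0 < μ) :
    Summable fun k : ℤ ↦ 1 / |(k : ℝ) ^ 2 - μ ^ 2| := by
  have hshift (a : ℝ) : Summable fun k : ℤ ↦ 1 / |(k : ℝ) + a| ^ (3 / 2 : ℝ) :=
    (Real.summable_one_div_int_add_rpow a _).2 (by norm_num)
  exact .of_nonneg_of_le (fun k ↦ by positivity) (fun k ↦ one_div_abs_sq_sub_sq_le (k : ℝ) hμ)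
    (((hshift (-μ)).add (hshift μ)).mul_left _)

lemma tsum_one_div_abs_int_sq_sub_sq_le (j : ℕ) :
    ∑' k : ℤ, 1 / |(k : ℝ) ^ 2 - (j + 1 / 2 : ℝ) ^ 2| ≤
      1 / √(j + 1 / 2 : ℝ) * (2 * ∑' n : ℤ, 1 / |(n : ℝ) + 1 / 2| ^ (3 / 2 : ℝ)) := by
  set g : ℤ → ℝ := fun n ↦ 1 / |(n : ℝ) + 1 / 2| ^ (3 / 2 : ℝ)
  have hg : HasSum g (∑' n, g n) :=
    ((Real.summable_one_div_int_add_rpow _ _).2 (by norm_num)).hasSum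
  have hleft : HasSum (fun k : ℤ ↦ 1 / |(k : ℝ) - (j + 1 / 2 : ℝ)| ^ (3 / 2 : ℝ)) (∑' n, g n) := by
    refine ((Equiv.subRight (j + 1 : ℤ)).hasSum_iff.2 hg).congr_fun fun k ↦ ?_
    simp only [g, Function.comp_apply, Equiv.subRight_apply]
    push_cast
    ring_nf
  have hright : HasSum (fun k : ℤ ↦ 1 / |(k : ℝ) + (j + 1 / 2 : ℝ)| ^ (3 / 2 : ℝ)) (∑' n, g n) := by
    refine ((Equiv.addRight (j : ℤ)).hasSum_iff.2 hg).congr_fun fun k ↦ ?_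
    simp only [g, Function.comp_apply, Equiv.coe_addRight]
    push_cast
    ring_nf
  have hμ : (0 : ℝ) < j + 1 / 2 := by positivity
  rw [two_mul]
  exact hasSum_le (fun k : ℤ ↦ one_div_abs_sq_sub_sq_le (k : ℝ) hμ)
    (summable_one_div_abs_int_sq_sub_sq hμ).hasSum ((hleft.add hright).mul_left _)

lemma tendsto_tsum_one_div_abs_int_sq_sub_sq :
    Tendsto (fun j : ℕ ↦ ∑' k : ℤ, 1 / |(k : ℝ) ^ 2 - (j + 1 / 2 : ℝ) ^ 2|) atTop (𝓝 0) := by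
  refine squeeze_zero (fun j ↦ tsum_nonneg fun k ↦ by positivity)
    tsum_one_div_abs_int_sq_sub_sq_le ?_
  rw [← zero_mul (2 * ∑' n : ℤ, 1 / |(n : ℝ) + 1 / 2| ^ (3 / 2 : ℝ))]
  refine Tendsto.mul_const _ (tendsto_const_nhds.div_atTop ?_)
  exact Real.tendsto_sqrt_atTop.comp
    (tendsto_atTop_add_const_right _ _ tendsto_natCast_atTop_atTop)

lemma hasDerivAt_intervalIntegral_of_continuous {E : Type*} [NormedAddCommGroup E]
    [NormedSpace ℝ E] {G G' : ℝ → ℝ → E} (hG : ∀ t, Continuous (G t))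
    (hG' : Continuous fun p : ℝ × ℝ ↦ G' p.1 p.2)
    (hderiv : ∀ t x, HasDerivAt (fun t ↦ G t x) (G' t x) t) (a b t : ℝ) :
    HasDerivAt (fun t ↦ ∫ x in a..b, G t x) (∫ x in a..b, G' t x) t := by
  obtain ⟨C, hC⟩ := ((isCompact_Icc (a := t - 1) (b := t + 1)).prod
    (isCompact_uIcc (a := a) (b := b))).exists_bound_of_continuousOn hG'.continuousOn
  exact (intervalIntegral.hasDerivAt_integral_of_dominated_loc_of_deriv_le
    (bound := fun _ ↦ C) (Icc_mem_nhds (sub_one_lt t) (lt_add_one t))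
    (.of_forall fun s ↦ (hG s).aestronglyMeasurable) ((hG t).intervalIntegrable _ _)
    (hG'.comp (Continuous.prodMk_right t)).aestronglyMeasurable
    (.of_forall fun x hx s hs ↦ hC (s, x) ⟨hs, uIoc_subset_uIcc hx⟩)
    intervalIntegrable_const (.of_forall fun x _ s _ ↦ hderiv s x)).2

section FourierCoeffOn

variable {a b : ℝ} (hab : a < b)

lemma fourierCoeffOn_add {f g : ℝ → ℂ} (hf : Continuous f) (hg : Continuous g) (n : ℤ) :
    fourierCoeffOn hab (f + g) n = fourierCoeffOn hab f n + fourierCoeffOn hab g n := by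
  simp only [fourierCoeffOn_eq_integral, Pi.add_apply, smul_add]
  rw [intervalIntegral.integral_add (Continuous.intervalIntegrable (by fun_prop) _ _)
    (Continuous.intervalIntegrable (by fun_prop) _ _), smul_add]

lemma norm_fourierCoeffOn_le {f : ℝ → ℂ} {C : ℝ} (hf : ∀ x, ‖f x‖ ≤ C) (n : ℤ) :
    ‖fourierCoeffOn hab f n‖ ≤ C := by
  have hba : 0 < b - a := sub_pos.2 hab
  have hint : ‖∫ x in a..b, fourier (-n) (x : AddCircle (b - a)) • f x‖ ≤ C * |b - a| :=
    intervalIntegral.norm_integral_le_of_norm_le_const fun x _ ↦ by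
      rw [norm_smul, fourier_apply, Circle.norm_coe, one_mul]
      exact hf x
  rw [fourierCoeffOn_eq_integral, norm_smul, Real.norm_of_nonneg (by positivity),
    one_div_mul_eq_div, div_le_iff₀ hba]
  rwa [abs_of_pos hba] at hint

lemma fourierCoeffOn_deriv_of_eq {f f' : ℝ → ℂ} (hf : ∀ x, HasDerivAt f (f' x) x)
    (hf' : Continuous f') (hends : f a = f b) (n : ℤ) :
    fourierCoeffOn hab f' n = 2 * π * Complex.I * n / (b - a) * fourierCoeffOn hab f n := by
  rcases eq_or_ne n 0 with rfl | hn
  · have hint := intervalIntegral.integral_eq_sub_of_hasDerivAt (fun x _ ↦ hf x)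
      (hf'.intervalIntegrable a b)
    simp [fourierCoeffOn_eq_integral, hint, hends]
  · have hba : (b - a : ℂ) ≠ 0 := by exact_mod_cast (sub_pos.2 hab).ne'
    rw [fourierCoeffOn_of_hasDerivAt hab hn (fun x _ ↦ hf x) (hf'.intervalIntegrable a b), hends]
    have hn' : (n : ℂ) ≠ 0 := by exact_mod_cast hn
    have hpi : (π : ℂ) ≠ 0 := by exact_mod_cast Real.pi_ne_zero
    field_simp
    ring

lemma hasDerivAt_fourierCoeffOn {G G' : ℝ → ℝ → ℂ} (hG : ∀ t, Continuous (G t))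
    (hG' : Continuous fun p : ℝ × ℝ ↦ G' p.1 p.2)
    (hderiv : ∀ t x, HasDerivAt (fun t ↦ G t x) (G' t x) t) (n : ℤ) (t : ℝ) :
    HasDerivAt (fun t ↦ fourierCoeffOn hab (G t) n) (fourierCoeffOn hab (G' t) n) t := by
  simp only [fourierCoeffOn_eq_integral, smul_eq_mul]
  have hcont : Continuous fun x : ℝ ↦ (fourier (-n) (x : AddCircle (b - a)) : ℂ) := by fun_prop
  exact (hasDerivAt_intervalIntegral_of_continuous (fun s ↦ hcont.mul (hG s))
    ((hcont.comp continuous_snd).mul hG') (fun s x ↦ (hderiv s x).const_mul _) a b t).const_smul _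

lemma norm_le_tsum_of_norm_fourierCoeffOn_le {f : ℝ → ℂ} (hf : ContinuousOn f (Icc a b))
    (hends : f a = f b) {c : ℤ → ℝ} (hc : Summable c) (hle : ∀ n, ‖fourierCoeffOn hab f n‖ ≤ c n)
    {x : ℝ} (hx : x ∈ Ioc a b) : ‖f x‖ ≤ ∑' n, c n := by
  have : Fact (0 < b - a) := ⟨sub_pos.2 hab⟩
  have hb : a + (b - a) = b := add_sub_cancel a b
  let F : C(AddCircle (b - a), ℂ) := ⟨AddCircle.liftIoc (b - a) a f,
    AddCircle.liftIoc_continuous (by rwa [hb]) (by rwa [hb])⟩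
  have hFx : F x = f x := AddCircle.liftIoc_coe_apply (by rwa [hb])
  have hcoeff : ∀ n, ‖fourierCoeff F n‖ ≤ c n := hle
  have hsum := has_pointwise_sum_fourier_series_of_summable (.of_norm_bounded hc hcoeff)
    (x : AddCircle (b - a))
  rw [← hFx, ← hsum.tsum_eq]
  refine tsum_of_norm_bounded hc.hasSum fun n ↦ ?_
  rw [norm_smul, fourier_apply, Circle.norm_coe, mul_one]
  exact hcoeff n

end FourierCoeffOn

section DirDeriv

variable {E F : Type*} [NormedAddCommGroup E] [NormedSpace ℝ E] [NormedAddCommGroup F]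
  [NormedSpace ℝ F] {f g : E → F} {m n : WithTop ℕ∞}

/-- The directional derivative of `f` along the constant vector field `e`, as a function of the
base point, so that it can be iterated as in `lap2`. -/
noncomputable def dirDeriv (e : E) (f : E → F) (p : E) : F :=
  fderiv ℝ f p e

lemma contDiff_dirDeriv (hf : ContDiff ℝ n f) (hmn : m + 1 ≤ n) (e : E) :
    ContDiff ℝ m (dirDeriv e f) :=
  (hf.fderiv_right hmn).clm_apply contDiff_const

lemma dirDeriv_add (hf : Differentiable ℝ f) (hg : Differentiable ℝ g) (e : E) :
    dirDeriv e (f + g) = dirDeriv e f + dirDeriv e g := by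
  ext p
  simp [dirDeriv, fderiv_add (hf p) (hg p)]

lemma dirDeriv_smul (hf : Differentiable ℝ f) (c : ℝ) (e : E) :
    dirDeriv e (c • f) = c • dirDeriv e f := by
  ext p
  simp [dirDeriv, fderiv_const_smul (hf p) c]

lemma periodic_dirDeriv {c : E} (hf : Function.Periodic f c) (e : E) :
    Function.Periodic (dirDeriv e f) c := fun p ↦ by
  rw [dirDeriv, ← fderiv_comp_add_right, funext hf, dirDeriv]

lemma hasDerivAt_slice_fst {f : ℝ × ℝ → F} (hf : Differentiable ℝ f) (θ t : ℝ) :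
    HasDerivAt (fun θ ↦ f (θ, t)) (dirDeriv (1, 0) f (θ, t)) θ :=
  (hf (θ, t)).hasFDerivAt.comp_hasDerivAt θ ((hasDerivAt_id θ).prodMk (hasDerivAt_const θ t))

lemma hasDerivAt_slice_snd {f : ℝ × ℝ → F} (hf : Differentiable ℝ f) (θ t : ℝ) :
    HasDerivAt (fun t ↦ f (θ, t)) (dirDeriv (0, 1) f (θ, t)) t :=
  (hf (θ, t)).hasFDerivAt.comp_hasDerivAt t ((hasDerivAt_const t θ).prodMk (hasDerivAt_id t))

end DirDeriv

section Laplacian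

variable {v w : ℝ × ℝ → ℝ}

lemma lap2_eq_dirDeriv (v : ℝ × ℝ → ℝ) :
    lap2 v = dirDeriv (1, 0) (dirDeriv (1, 0) v) + dirDeriv (0, 1) (dirDeriv (0, 1) v) :=
  rfl

lemma lap2_add (hv : ContDiff ℝ 2 v) (hw : ContDiff ℝ 2 w) : lap2 (v + w) = lap2 v + lap2 w := by
  have hdiff {u : ℝ × ℝ → ℝ} (hu : ContDiff ℝ 2 u) (e : ℝ × ℝ) : Differentiable ℝ (dirDeriv e u) :=
    (contDiff_dirDeriv (m := 1) hu one_add_one_eq_two.le e).differentiable one_ne_zero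
  simp only [lap2_eq_dirDeriv, hdiff hv, hdiff hw, dirDeriv_add,
    hv.differentiable two_ne_zero, hw.differentiable two_ne_zero]
  abel

lemma lap2_smul (hv : ContDiff ℝ 2 v) (c : ℝ) : lap2 (c • v) = c • lap2 v := by
  have hdiff (e : ℝ × ℝ) : Differentiable ℝ (dirDeriv e v) :=
    (contDiff_dirDeriv (m := 1) hv one_add_one_eq_two.le e).differentiable one_ne_zero
  simp only [lap2_eq_dirDeriv, dirDeriv_smul, hdiff, hv.differentiable two_ne_zero, smul_add]

end Laplacian

section FourierMode

variable {v w : ℝ × ℝ → ℝ}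

/-- The `k`-th Fourier coefficient of `θ ↦ v (θ, t)` on `[0, 2π]`, as a function of `t`. -/
noncomputable def fourierMode (k : ℤ) (v : ℝ × ℝ → ℝ) (t : ℝ) : ℂ :=
  fourierCoeffOn Real.two_pi_pos (fun θ ↦ (v (θ, t) : ℂ)) k

lemma fourierMode_add (hv : Continuous v) (hw : Continuous w) (k : ℤ) :
    fourierMode k (v + w) = fourierMode k v + fourierMode k w := by
  ext t
  simp only [fourierMode, Pi.add_apply, Complex.ofReal_add]
  exact fourierCoeffOn_add Real.two_pi_pos (by fun_prop) (by fun_prop) k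

lemma fourierMode_smul (c : ℝ) (v : ℝ × ℝ → ℝ) (k : ℤ) :
    fourierMode k (c • v) = c • fourierMode k v := by
  ext t
  simp only [fourierMode, Pi.smul_apply, smul_eq_mul, Complex.ofReal_mul, Complex.real_smul]
  exact fourierCoeffOn.const_mul _ _ k Real.two_pi_pos

lemma norm_fourierMode_le {C t : ℝ} (hC : ∀ θ, |v (θ, t)| ≤ C) (k : ℤ) : ‖fourierMode k v t‖ ≤ C :=
  norm_fourierCoeffOn_le Real.two_pi_pos (fun θ ↦ (Complex.norm_real _).trans_le (hC θ)) k

lemma hasDerivAt_fourierMode (hv : ContDiff ℝ 1 v) (k : ℤ) (t : ℝ) :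
    HasDerivAt (fourierMode k v) (fourierMode k (dirDeriv (0, 1) v) t) t := by
  have hcont : Continuous v := hv.continuous
  have hcont' : Continuous (dirDeriv (0, 1) v) :=
    (contDiff_dirDeriv (m := 0) hv (zero_add 1).le _).continuous
  exact hasDerivAt_fourierCoeffOn Real.two_pi_pos (by fun_prop) (by fun_prop)
    (fun t θ ↦ (hasDerivAt_slice_snd (hv.differentiable one_ne_zero) θ t).ofReal_comp) k t

lemma fourierMode_dirDeriv_fst (hv : ContDiff ℝ 1 v) (hper : Function.Periodic v (2 * π, 0))
    (k : ℤ) : fourierMode k (dirDeriv (1, 0) v) = (Complex.I * k) • fourierMode k v := by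
  ext t
  have hcont : Continuous (dirDeriv (1, 0) v) :=
    (contDiff_dirDeriv (m := 0) hv (zero_add 1).le _).continuous
  have hends : v (0, t) = v (2 * π, t) := by simpa using (hper (0, t)).symm
  have hpi : (π : ℂ) ≠ 0 := by exact_mod_cast Real.pi_ne_zero
  rw [fourierMode, fourierCoeffOn_deriv_of_eq Real.two_pi_pos
    (fun θ ↦ (hasDerivAt_slice_fst (hv.differentiable one_ne_zero) θ t).ofReal_comp)
    (by fun_prop) (by rw [hends]), Pi.smul_apply, smul_eq_mul, fourierMode]
  congr 1
  push_cast
  field_simp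
  ring

lemma hasDerivAt_fourierMode_dirDeriv_snd (hv : ContDiff ℝ 2 v)
    (hper : Function.Periodic v (2 * π, 0)) (k : ℤ) (t : ℝ) :
    HasDerivAt (fourierMode k (dirDeriv (0, 1) v))
      ((k : ℝ) ^ 2 • fourierMode k v t + fourierMode k (lap2 v) t) t := by
  have hsmooth (e : ℝ × ℝ) : ContDiff ℝ 1 (dirDeriv e v) :=
    contDiff_dirDeriv hv one_add_one_eq_two.le e
  have hcont (e : ℝ × ℝ) : Continuous (dirDeriv e (dirDeriv e v)) :=
    (contDiff_dirDeriv (m := 0) (hsmooth e) (zero_add 1).le e).continuous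
  have hlap : fourierMode k (lap2 v) =
      (-k ^ 2 : ℂ) • fourierMode k v + fourierMode k (dirDeriv (0, 1) (dirDeriv (0, 1) v)) := by
    rw [lap2_eq_dirDeriv, fourierMode_add (hcont _) (hcont _),
      fourierMode_dirDeriv_fst (hsmooth _) (periodic_dirDeriv hper _),
      fourierMode_dirDeriv_fst (hv.of_le one_le_two) hper, smul_smul, mul_mul_mul_comm,
      Complex.I_mul_I, neg_one_mul, sq]
  refine (hasDerivAt_fourierMode (hsmooth _) k t).congr_deriv ?_
  simp [hlap]

lemma abs_le_tsum_of_norm_fourierMode_le (hv : Continuous v)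
    (hper : Function.Periodic v (2 * π, 0)) {c : ℤ → ℝ} (hc : Summable c) {t : ℝ}
    (hle : ∀ k, ‖fourierMode k v t‖ ≤ c k) (θ : ℝ) : |v (θ, t)| ≤ ∑' k, c k := by
  have hslice : Function.Periodic (fun θ ↦ v (θ, t)) (2 * π) := fun θ ↦ by
    simpa using hper (θ, t)
  obtain ⟨x, hx, hθx⟩ := hslice.exists_mem_Ioc Real.two_pi_pos θ 0
  rw [zero_add] at hx
  rw [hθx, ← Real.norm_eq_abs, ← Complex.norm_real]
  exact norm_le_tsum_of_norm_fourierCoeffOn_le Real.two_pi_pos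
    (f := fun θ ↦ (v (θ, t) : ℂ)) (by fun_prop) (by simpa using (hslice 0).symm) hc hle hx

end FourierMode

lemma int_sq_lt_half_odd_sq_iff {k : ℤ} {j : ℕ} :
    (k : ℝ) ^ 2 < (j + 1 / 2 : ℝ) ^ 2 ↔ |k| ≤ j := by
  have hcast : (|k| : ℤ) < (j + 1 / 2 : ℝ) ↔ 2 * |k| < 2 * (j : ℤ) + 1 := by
    rw [← Int.cast_lt (R := ℝ)]
    push_cast
    constructor <;> intro h <;> linarith
  rw [sq_lt_sq, abs_of_pos (by positivity : (0 : ℝ) < j + 1 / 2), ← Int.cast_abs, hcast]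
  lia

lemma int_sq_ne_half_odd_sq (k : ℤ) (j : ℕ) : (k : ℝ) ^ 2 ≠ (j + 1 / 2 : ℝ) ^ 2 := by
  intro h
  have hodd : (2 * k) ^ 2 = (2 * j + 1 : ℤ) ^ 2 := by
    exact_mod_cast (by linear_combination 4 * h : ((2 * k) ^ 2 : ℝ) = (2 * j + 1) ^ 2)
  rcases sq_eq_sq_iff_eq_or_eq_neg.1 hodd with h | h <;> omega

lemma eq_zero_of_forall_abs_le_mul_imp {X : Type*} {v w : X → ℝ} {A q : ℝ} (hq : q < 1)
    (hw : ∀ x, 0 < w x) (hA : ∀ x, |v x| ≤ A * w x)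
    (himp : ∀ B, (∀ x, |v x| ≤ B * w x) → ∀ x, |v x| ≤ q * B * w x) : v = 0 := by
  ext x
  have : Nonempty X := ⟨x⟩
  set S := ⨆ x, |v x| / w x
  have hbdd : BddAbove (range fun x ↦ |v x| / w x) :=
    ⟨A, forall_mem_range.2 fun x ↦ (div_le_iff₀ (hw x)).2 (hA x)⟩
  have hS (x : X) : |v x| ≤ S * w x := (div_le_iff₀ (hw x)).1 (le_ciSup hbdd x)
  have hSq : S ≤ q * S := ciSup_le fun x ↦ (div_le_iff₀ (hw x)).2 (himp S hS x)
  have hS0 : S ≤ 0 := by nlinarith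
  exact abs_nonpos_iff.1 ((hS x).trans (mul_nonpos_of_nonpos_of_nonneg hS0 (hw x).le))

section SpectralGap

variable {v : ℝ × ℝ → ℝ} {α m A C : ℝ}

lemma norm_fourierMode_le_mul_cosh (hv : ContDiff ℝ 2 v) (hper : Function.Periodic v (2 * π, 0))
    (hαm : α < m) (hgrowth : ∃ D, ∀ p, |v p| ≤ D * Real.exp (α * |p.2|))
    (hlap : ∀ p, |lap2 v p| ≤ A * Real.cosh (m * p.2)) {k : ℤ} (hkm : (k : ℝ) ^ 2 ≠ m ^ 2)
    (hlow : (k : ℝ) ^ 2 < m ^ 2 →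
      fourierMode k v 0 = 0 ∧ fourierMode k (dirDeriv (0, 1) v) 0 = 0) (t : ℝ) :
    ‖fourierMode k v t‖ ≤ A * Real.cosh (m * t) * (1 / |(k : ℝ) ^ 2 - m ^ 2|) := by
  have hy := hasDerivAt_fourierMode (hv.of_le one_le_two) k
  have hy' := hasDerivAt_fourierMode_dirDeriv_snd hv hper k
  have hf (s : ℝ) : ‖fourierMode k (lap2 v) s‖ ≤ A * Real.cosh (m * s) :=
    norm_fourierMode_le (fun θ ↦ hlap (θ, s)) k
  rw [mul_one_div, ← div_mul_eq_mul_div]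
  rcases hkm.lt_or_gt with hlt | hgt
  · obtain ⟨h0, h0'⟩ := hlow hlt
    rw [abs_of_neg (sub_neg.2 hlt), neg_sub]
    exact norm_le_div_mul_cosh_of_initial_eq_zero hlt hy hy' hf h0 h0' t
  · obtain ⟨D, hD⟩ := hgrowth
    have hbigO : fourierMode k v =O[cocompact ℝ] fun s ↦ Real.exp (α * |s|) :=
      .of_bound D <| .of_forall fun s ↦ by
        rw [Real.norm_of_nonneg (Real.exp_pos _).le]
        exact norm_fourierMode_le (fun θ ↦ hD (θ, s)) k
    rw [abs_of_pos (sub_pos.2 hgt)]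
    exact norm_le_div_mul_cosh_of_isLittleO hgt hy hy' hf
      (hbigO.trans_isLittleO (isLittleO_exp_mul_abs_cosh_mul hαm)) t

lemma abs_le_tsum_mul_cosh (hv : ContDiff ℝ 2 v) (hper : Function.Periodic v (2 * π, 0))
    (hm : 0 < m) (hαm : α < m) (hgrowth : ∃ D, ∀ p, |v p| ≤ D * Real.exp (α * |p.2|))
    (hlap : ∀ p, |lap2 v p| ≤ A * Real.cosh (m * p.2)) (hgap : ∀ k : ℤ, (k : ℝ) ^ 2 ≠ m ^ 2)
    (hlow : ∀ k : ℤ, (k : ℝ) ^ 2 < m ^ 2 →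
      fourierMode k v 0 = 0 ∧ fourierMode k (dirDeriv (0, 1) v) 0 = 0) (p : ℝ × ℝ) :
    |v p| ≤ A * (∑' k : ℤ, 1 / |(k : ℝ) ^ 2 - m ^ 2|) * Real.cosh (m * p.2) := by
  rw [mul_right_comm, ← tsum_mul_left]
  exact abs_le_tsum_of_norm_fourierMode_le hv.continuous hper
    ((summable_one_div_abs_int_sq_sub_sq hm).mul_left _)
    (fun k ↦ norm_fourierMode_le_mul_cosh hv hper hαm hgrowth hlap (hgap k) (hlow k) p.2) p.1

lemma eq_zero_of_abs_lap2_le_of_mul_tsum_lt_one (hv : ContDiff ℝ 2 v)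
    (hper : Function.Periodic v (2 * π, 0)) (hm : 0 < m) (hαm : α < m)
    (hgrowth : ∃ D, ∀ p, |v p| ≤ D * Real.exp (α * |p.2|)) (hC : 0 ≤ C)
    (hlap : ∀ p, |lap2 v p| ≤ C * |v p|) (hgap : ∀ k : ℤ, (k : ℝ) ^ 2 ≠ m ^ 2)
    (hlow : ∀ k : ℤ, (k : ℝ) ^ 2 < m ^ 2 →
      fourierMode k v 0 = 0 ∧ fourierMode k (dirDeriv (0, 1) v) 0 = 0)
    (hsmall : C * ∑' k : ℤ, 1 / |(k : ℝ) ^ 2 - m ^ 2| < 1) : v = 0 := by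
  obtain ⟨D, hD⟩ := id hgrowth
  have hD0 : 0 ≤ D := (abs_nonneg _).trans (by simpa using hD 0)
  refine eq_zero_of_forall_abs_le_mul_imp (w := fun p ↦ Real.cosh (m * p.2)) (A := 2 * D) hsmall
    (fun p ↦ Real.cosh_pos _) (fun p ↦ ?_) fun B hB p ↦ ?_
  · calc |v p| ≤ D * Real.exp (α * |p.2|) := hD p
      _ ≤ D * (2 * Real.cosh (m * p.2)) := by
        gcongr
        exact exp_mul_abs_le_two_mul_cosh hαm.le p.2
      _ = 2 * D * Real.cosh (m * p.2) := by ring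
  · have hlapB (p : ℝ × ℝ) : |lap2 v p| ≤ C * B * Real.cosh (m * p.2) := by
      rw [mul_assoc]
      exact (hlap p).trans (mul_le_mul_of_nonneg_left (hB p) hC)
    rw [mul_right_comm C]
    exact abs_le_tsum_mul_cosh hv hper hm hαm hgrowth hlapB hgap hlow p

lemma exists_nat_forall_eq_zero_of_abs_lap2_le (α : ℝ) (hC : 0 ≤ C) :
    ∃ j : ℕ, ∀ v : ℝ × ℝ → ℝ, ContDiff ℝ 2 v → Function.Periodic v (2 * π, 0) →
      (∃ D, ∀ p, |v p| ≤ D * Real.exp (α * |p.2|)) → (∀ p, |lap2 v p| ≤ C * |v p|) →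
      (∀ k : ℤ, |k| ≤ j → fourierMode k v 0 = 0 ∧ fourierMode k (dirDeriv (0, 1) v) 0 = 0) →
      v = 0 := by
  have hsmall : ∀ᶠ j : ℕ in atTop, C * ∑' k : ℤ, 1 / |(k : ℝ) ^ 2 - (j + 1 / 2 : ℝ) ^ 2| < 1 := by
    refine (tendsto_tsum_one_div_abs_int_sq_sub_sq.const_mul C).eventually_lt_const ?_
    rw [mul_zero]
    exact one_pos
  obtain ⟨j, hj, hαj⟩ :=
    (hsmall.and (tendsto_natCast_atTop_atTop.eventually_ge_atTop α)).exists
  refine ⟨j, fun v hv hper hgrowth hlap hlow ↦ ?_⟩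
  exact eq_zero_of_abs_lap2_le_of_mul_tsum_lt_one hv hper (by positivity) (by linarith) hgrowth hC
    hlap (int_sq_ne_half_odd_sq · j) (fun k hk ↦ hlow k (int_sq_lt_half_odd_sq_iff.1 hk)) hj

end SpectralGap

section FiniteDimensional

variable {W : Submodule ℝ (ℝ × ℝ → ℝ)}

/-- The value and the `t`-derivative at `t = 0` of the Fourier modes with index in `s`, on a space
of `C¹` functions. -/
noncomputable def cauchyData (s : Finset ℤ) (hW : ∀ v ∈ W, ContDiff ℝ 1 v) :
    W →ₗ[ℝ] (s → ℂ × ℂ) where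
  toFun v k := (fourierMode k v 0, fourierMode k (dirDeriv (0, 1) v) 0)
  map_add' v w := by
    have hcont (v : W) : Continuous (dirDeriv (0, 1) v.1) :=
      (contDiff_dirDeriv (m := 0) (hW v v.2) (zero_add 1).le _).continuous
    ext k <;> simp [fourierMode_add, (hW _ v.2).continuous, (hW _ w.2).continuous, hcont,
      dirDeriv_add, (hW _ v.2).differentiable, (hW _ w.2).differentiable]
  map_smul' c v := by
    ext k <;> simp [fourierMode_smul, dirDeriv_smul, (hW _ v.2).differentiable]

lemma finiteDimensional_of_abs_lap2_le {α C : ℝ} (hC : 0 ≤ C) (hsmooth : ∀ v ∈ W, ContDiff ℝ 2 v)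
    (hper : ∀ v ∈ W, Function.Periodic v (2 * π, 0))
    (hgrowth : ∀ v ∈ W, ∃ D, ∀ p, |v p| ≤ D * Real.exp (α * |p.2|))
    (hlap : ∀ v ∈ W, ∀ p, |lap2 v p| ≤ C * |v p|) : FiniteDimensional ℝ W := by
  obtain ⟨j, hj⟩ := exists_nat_forall_eq_zero_of_abs_lap2_le α hC
  let T := cauchyData (Finset.Icc (-j : ℤ) j) fun v hv ↦ (hsmooth v hv).of_le one_le_two
  refine Module.Finite.of_injective T ((injective_iff_map_eq_zero T).2 fun ⟨v, hv⟩ hTv ↦ ?_)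
  refine Subtype.ext (hj v (hsmooth v hv) (hper v hv) (hgrowth v hv) (hlap v hv) fun k hk ↦ ?_)
  exact Prod.ext_iff.1 (congr_fun hTv ⟨k, Finset.mem_Icc.2 (abs_le.1 hk)⟩)

/-- The `C²` solutions of `Δv + V v = 0`, `2π`-periodic in the first variable, whose growth is at
most that of `exp (α |t|)`; for `α = 0` these are the bounded solutions. -/
def schrodingerKernel (V : ℝ × ℝ → ℝ) (α : ℝ) : Submodule ℝ (ℝ × ℝ → ℝ) where
  carrier := {v | (∃ C : ℝ, ∀ p, |v p| ≤ C * Real.exp (α * |p.2|)) ∧ ContDiff ℝ 2 v ∧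
    (∀ θ t : ℝ, v (θ + 2 * π, t) = v (θ, t)) ∧ ∀ p, lap2 v p + V p * v p = 0}
  zero_mem' := ⟨⟨0, by simp⟩, contDiff_const, by simp, fun p ↦ by
    simpa using congr_fun (lap2_smul (v := 0) contDiff_const 0) p⟩
  add_mem' := by
    rintro v w ⟨⟨A, hA⟩, hv, hvper, hveq⟩ ⟨⟨B, hB⟩, hw, hwper, hweq⟩
    refine ⟨⟨A + B, fun p ↦ ?_⟩, hv.add hw, fun θ t ↦ ?_, fun p ↦ ?_⟩
    · rw [add_mul]
      exact (abs_add_le _ _).trans (add_le_add (hA p) (hB p))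
    · simp [hvper, hwper]
    · simp only [lap2_add hv hw, Pi.add_apply]
      linear_combination hveq p + hweq p
  smul_mem' := by
    rintro c v ⟨⟨A, hA⟩, hv, hvper, hveq⟩
    refine ⟨⟨|c| * A, fun p ↦ ?_⟩, hv.const_smul c, fun θ t ↦ ?_, fun p ↦ ?_⟩
    · rw [Pi.smul_apply, smul_eq_mul, abs_mul, mul_assoc]
      exact mul_le_mul_of_nonneg_left (hA p) (abs_nonneg c)
    · simp [hvper]
    · simp only [lap2_smul hv, Pi.smul_apply, smul_eq_mul]
      linear_combination c * hveq p

end FiniteDimensional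

theorem bounded_kernel_of_schrodinger_operator_on_cylinder_finite_dimensional_general
    (V : ℝ × ℝ → ℝ) (hVbdd : ∃ C : ℝ, ∀ p, |V p| ≤ C) (α : ℝ) :
    FiniteDimensional ℝ (schrodingerKernel V α) := by
  obtain ⟨C, hC⟩ := hVbdd
  refine finiteDimensional_of_abs_lap2_le ((abs_nonneg _).trans (hC 0)) (fun v hv ↦ hv.2.1)
    (fun v hv ⟨θ, t⟩ ↦ by simpa using hv.2.2.1 θ t) (fun v hv ↦ hv.1) fun v hv p ↦ ?_
  rw [eq_neg_of_add_eq_zero_left (hv.2.2.2 p), abs_neg, abs_mul]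
  gcongr
  exact hC p

/-- For a bounded continuous potential `V` on the flat cylinder (i.e. `2π`-periodic in
the first variable on `ℝ²`), the space of bounded `C²` solutions, `2π`-periodic in the
first variable, of the Schrödinger equation `Δv + V v = 0` is finite dimensional. -/
theorem bounded_kernel_of_schrodinger_operator_on_cylinder_finite_dimensional
    (V : ℝ × ℝ → ℝ) (hVcont : Continuous V) (hVbdd : ∃ C : ℝ, ∀ p, |V p| ≤ C)
    (hVper : ∀ θ t : ℝ, V (θ + 2 * Real.pi, t) = V (θ, t)) :
    FiniteDimensional ℝ (Submodule.span ℝ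
      {v : ℝ × ℝ → ℝ |
        (∃ C : ℝ, ∀ p, |v p| ≤ C) ∧
        ContDiff ℝ 2 v ∧
        (∀ θ t : ℝ, v (θ + 2 * Real.pi, t) = v (θ, t)) ∧
        (∀ p, lap2 v p + V p * v p = 0)}) := by
  have := bounded_kernel_of_schrodinger_operator_on_cylinder_finite_dimensional_general V hVbdd 0
  refine Submodule.finiteDimensional_of_le (S₂ := schrodingerKernel V 0) (Submodule.span_le.2 ?_)
  exact fun v ⟨hbdd, hv⟩ ↦ ⟨by simpa using hbdd, hv⟩
end
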